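/- Assume Conditions (C). Let 1 > ε′ > 0. For f = f_n = o(n^{1/3}) sufficiently large and for any 1 ≥ ε > 0, there exists a constant A > 0 such that the probability that the following event fails is at most A·exp(−f^ε/A): the exploration of H*_f starts before time ℓ_n^{2/3}/(f^{1−ε}·C) and ends between times 2(1−ε′)·f·ℓ_n^{2/3}/C and 2(1+ε′)·f·ℓ_n^{2/3}/C of the breadth-first walk. -/

import Mathlib

open MeasureTheory Filter Asymptotics
open scoped Classical ENNReal Topology

noncomputable section

/-- `ℓ_n`: the total weight. -/
def ell (w : ∀ n : ℕ, Fin n → ℝ) (n : ℕ) : ℝ := ∑ i, w n i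

/-- Conditions (C) on the triangular array of weights, relative to the law `μ` of the
limiting random variable `W`. -/
structure CondC (w : ∀ n : ℕ, Fin n → ℝ) (μ : Measure ℝ) : Prop where
  isProb : IsProbabilityMeasure μ
  pos : ∀ᵐ x ∂μ, 0 < x
  w_pos : ∀ n, ∀ i : Fin n, 0 < w n i
  w_anti : ∀ n, ∀ i j : Fin n, i ≤ j → w n j ≤ w n i
  int3 : Integrable (fun x => x ^ 3) μ
  moment_eq : ∫ x, x ^ 2 ∂μ = ∫ x, x ∂μ
  weak : ∀ g : BoundedContinuousFunction ℝ ℝ,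
    Tendsto (fun n : ℕ => (∑ i : Fin n, g (w n i)) / (n : ℝ)) atTop (𝓝 (∫ x, g x ∂μ))
  ell_asymp : (fun n : ℕ => ell w n - (∫ x, x ∂μ) * (n : ℝ)) =o[atTop]
      fun n : ℕ => (n : ℝ) ^ ((2 : ℝ) / 3)
  sq_asymp : (fun n : ℕ => (∑ i : Fin n, (w n i) ^ 2) - (∫ x, x ^ 2 ∂μ) * (n : ℝ)) =o[atTop]
      fun n : ℕ => (n : ℝ) ^ ((2 : ℝ) / 3)
  cube_asymp : (fun n : ℕ => (∑ i : Fin n, (w n i) ^ 3) - (∫ x, x ^ 3 ∂μ) * (n : ℝ)) =o[atTop]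
      fun _ : ℕ => (1 : ℝ)
  max_asymp : (fun n : ℕ => ⨆ i : Fin n, w n i) =o[atTop] fun n : ℕ => (n : ℝ) ^ ((1 : ℝ) / 3)

/-- The constant `C = E[W³]/E[W]`. -/
def Cconst (μ : Measure ℝ) : ℝ := (∫ x, x ^ 3 ∂μ) / (∫ x, x ∂μ)

/-- The critical percolation parameter `p_f = (ℓ_n^{1/3} + f_n)/ℓ_n^{4/3}`. -/
def pf (w : ∀ n : ℕ, Fin n → ℝ) (f : ℕ → ℝ) (n : ℕ) : ℝ :=
  (ell w n ^ ((1 : ℝ) / 3) + f n) / ell w n ^ ((4 : ℝ) / 3)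

/-- A Bernoulli-type measure on `Bool` with parameter `p`. -/
def bern (p : ℝ) : Measure Bool :=
  ENNReal.ofReal (1 - p) • Measure.dirac false + ENNReal.ofReal p • Measure.dirac true

/-- The law of the independent edge indicators of the rank-1 inhomogeneous random graph
`G(W,p)`: the indicator attached to the (ordered) pair `(i,j)` is Bernoulli with success
probability `1 - exp (- w i * w j * p)`, all independent. -/
def graphMeasure (n : ℕ) (wn : Fin n → ℝ) (p : ℝ) : Measure (Fin n → Fin n → Bool) :=
  Measure.pi fun i => Measure.pi fun j => bern (1 - Real.exp (-(wn i * wn j * p)))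

/-- The simple graph built from a sample of edge indicators: `i ~ j` iff `i ≠ j` and the
indicator of the pair `(min i j, max i j)` is `true`. -/
def graphOf {n : ℕ} (ω : Fin n → Fin n → Bool) : SimpleGraph (Fin n) :=
  SimpleGraph.fromRel fun i j => ω (min i j) (max i j) = true

/-- The size (number of vertices) of a connected component. -/
def csize {n : ℕ} (G : SimpleGraph (Fin n)) (c : G.ConnectedComponent) : ℕ :=
  Nat.card {v : Fin n // G.connectedComponentMk v = c}

/-- The weight of a connected component: sum of the weights of its vertices. -/
def cweight {n : ℕ} (wn : Fin n → ℝ) (G : SimpleGraph (Fin n)) (c : G.ConnectedComponent) : ℝ :=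
  ∑ v : Fin n, if G.connectedComponentMk v = c then wn v else 0

/-- The number of edges of a connected component. -/
def cedges {n : ℕ} (G : SimpleGraph (Fin n)) (c : G.ConnectedComponent) : ℕ :=
  Nat.card {e : Sym2 (Fin n) // e ∈ G.edgeSet ∧ ∀ v ∈ e, G.connectedComponentMk v = c}

/-- The surplus (excess) of a connected component: edges − vertices + 1. -/
def csurplus {n : ℕ} (G : SimpleGraph (Fin n)) (c : G.ConnectedComponent) : ℤ :=
  (cedges G c : ℤ) - (csize G c : ℤ) + 1

/-- `c` is a largest connected component. -/
def isLargest {n : ℕ} (G : SimpleGraph (Fin n)) (c : G.ConnectedComponent) : Prop :=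
  ∀ c', csize G c' ≤ csize G c

/-- The finset of connected components of a graph on `Fin n`. -/
def comps {n : ℕ} (G : SimpleGraph (Fin n)) : Finset G.ConnectedComponent :=
  Finset.univ.image G.connectedComponentMk

/-- The law of the size-biased random order without replacement `(v(1),…,v(n))`, seen as a
measure on functions `Fin n → Fin n` (supported on permutations `σ`, with
`P(v = σ) = ∏_i w (σ i) / (ℓ_n − ∑_{k<i} w (σ k))`). -/
def sbMeasure (n : ℕ) (wn : Fin n → ℝ) : Measure (Fin n → Fin n) :=
  Measure.sum fun σ : Equiv.Perm (Fin n) =>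
    ENNReal.ofReal (∏ i : Fin n,
        wn (σ i) / ((∑ k, wn k) - ∑ k ∈ Finset.univ.filter fun k => k < i, wn (σ k))) •
      Measure.dirac ⇑σ

/-- The joint law of (edge indicators of `G(W,p)`, size-biased order), the two being
independent. -/
def expMeasure' (n : ℕ) (wn : Fin n → ℝ) (p : ℝ) :
    Measure ((Fin n → Fin n → Bool) × (Fin n → Fin n)) :=
  Measure.sum fun σ : Equiv.Perm (Fin n) =>
    ENNReal.ofReal (∏ i : Fin n,
        wn (σ i) / ((∑ k, wn k) - ∑ k ∈ Finset.univ.filter fun k => k < i, wn (σ k))) •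
      (graphMeasure n wn p).map fun g => (g, ⇑σ)

/-- `sbW wn vord k` is `w_{v(k)}` (1-based), with the conventions `w_{v(0)} = 0` and
`w_{v(k)} = 0` for `k > n`. -/
def sbW {n : ℕ} (wn : Fin n → ℝ) (vord : Fin n → Fin n) (k : ℕ) : ℝ :=
  if h : k - 1 < n then (if k = 0 then 0 else wn (vord ⟨k - 1, h⟩)) else 0

/-- The (0-based) first position, in the order `vord`, of a vertex of the component `c`;
this governs the order in which components are discovered by the breadth-first walk. -/
def firstIdx {n : ℕ} (G : SimpleGraph (Fin n)) (vord : Fin n → Fin n)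
    (c : G.ConnectedComponent) : ℕ :=
  sInf {i : ℕ | ∃ h : i < n, G.connectedComponentMk (vord ⟨i, h⟩) = c}

/-- The number of vertices explored strictly before the exploration of the component `c`
starts: components are explored in the order of their first appearance in `vord`, and the
exploration of `c` occupies the steps `startT c + 1, …, startT c + csize c`. -/
def startT {n : ℕ} (G : SimpleGraph (Fin n)) (vord : Fin n → Fin n)
    (c : G.ConnectedComponent) : ℕ :=
  ∑ v : Fin n, if firstIdx G vord (G.connectedComponentMk v) < firstIdx G vord c then 1 else 0

/-- The state (explored vertices, queue of discovered-but-unexplored vertices) of the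
breadth-first walk after `i` steps; roots are chosen as the first undiscovered vertex in the
order `vord`, and children are queued in the order `vord`. -/
def bfwQueue {n : ℕ} (G : SimpleGraph (Fin n)) (vord : Fin n → Fin n) :
    ℕ → Finset (Fin n) × List (Fin n)
  | 0 => (∅, [])
  | i + 1 =>
    let s := bfwQueue G vord i
    let q : List (Fin n) :=
      if s.2.isEmpty then ((List.ofFn vord).filter fun v => decide (v ∉ s.1)).take 1 else s.2
    match q with
    | [] => (s.1, [])
    | v :: rest =>
      (insert v s.1,
        rest ++ (List.ofFn vord).filter fun u => decide (G.Adj v u ∧ u ∉ s.1 ∧ u ∉ q))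

/-- The reflected exploration process `L` of the breadth-first walk:
`L_0 = 1`, `L_{i+1} = max (L_i + c(i+1) - 1) 1`. -/
def Lproc {n : ℕ} (G : SimpleGraph (Fin n)) (vord : Fin n → Fin n) (i : ℕ) : ℕ :=
  max (bfwQueue G vord i).2.length 1

/-- `discNbrs G vord i` is the number of neighbours of `v(i+1)` (0-based: `vord i`) outside
`{v(1),…,v(i+1)}`, i.e. the increment `X⁰_{i+1} + 1` of the process `L⁰`. -/
def discNbrs {n : ℕ} (G : SimpleGraph (Fin n)) (vord : Fin n → Fin n) (i : ℕ) : ℕ :=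
  Nat.card {j : Fin n // (∃ h : i < n, G.Adj (vord ⟨i, h⟩) j) ∧
    ∀ k : ℕ, ∀ hk : k < n, k ≤ i → vord ⟨k, hk⟩ ≠ j}

/-- The process `L⁰`: `L⁰_0 = 1`, `L⁰_{i+1} = L⁰_i + X⁰_{i+1}` where
`X⁰_{i+1} = ∑_{j ∉ {v(1),…,v(i+1)}} Y(v(i+1), j) − 1`. -/
def L0 {n : ℕ} (G : SimpleGraph (Fin n)) (vord : Fin n → Fin n) (m : ℕ) : ℤ :=
  1 - (m : ℤ) + ∑ i ∈ Finset.range m, (discNbrs G vord i : ℤ)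

/-- The deterministic-drift process `L̃^h`, defined by
`L̃^h_m + m − 1 = ∑_{i=1}^m ∑_{k > i+h} (1 − exp (−w_{v(i)} w_{v(k)} p))`,
the inner sum being over positions `k ≤ n` in the size-biased order. -/
def Ltilde {n : ℕ} (wn : Fin n → ℝ) (p : ℝ) (vord : Fin n → Fin n) (h m : ℕ) : ℝ :=
  1 - (m : ℝ) + ∑ i ∈ Finset.range m,
    if hi : i < n then
      ∑ k : Fin n, if i + h < (k : ℕ) then
        1 - Real.exp (-(wn (vord ⟨i, hi⟩) * wn (vord k) * p)) else 0
    else 0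

/-- The law of the independent exponential clocks `(T_k)_{k ≤ n}`, `T_k` of rate `w_k / ℓ_n`. -/
def clocksMeasure (n : ℕ) (wn : Fin n → ℝ) : Measure (Fin n → ℝ) :=
  Measure.pi fun k => ProbabilityTheory.expMeasure (wn k / ∑ i, wn i)

/-- `N(x)`: the number of clocks that have rung by time `x`. -/
def Nclock {n : ℕ} (x : ℝ) (ω : Fin n → ℝ) : ℕ :=
  ∑ k : Fin n, if ω k ≤ x then 1 else 0

/-- `X(x)`: the total weight of the clocks that have rung by time `x`. -/
def Xclock {n : ℕ} (wn : Fin n → ℝ) (x : ℝ) (ω : Fin n → ℝ) : ℝ :=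
  ∑ k : Fin n, if ω k ≤ x then wn k else 0

/-- Conditions (C2) on a pair of sequences `(a, b)`, relative to the constant `Ā`. -/
structure Cond2 (w : ∀ n : ℕ, Fin n → ℝ) (Abar : ℝ) (a b : ℕ → ℝ) : Prop where
  exp_lt : ∀ᶠ n : ℕ in atTop,
    Real.exp (-(b n) ^ 2 / (Abar * (b n * (n : ℝ) ^ ((1 : ℝ) / 3) + a n))) < 1 / 4
  a_top : Tendsto a atTop atTop
  b_top : Tendsto b atTop atTop
  a_lito : a =o[atTop] fun n : ℕ => (n : ℝ)
  b_bigO : b =O[atTop] a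
  a_bigO : a =O[atTop] fun n => b n * ell w n ^ ((1 : ℝ) / 3)
  a_sq_bigO : (fun n => a n ^ 2) =O[atTop] fun n => b n * ell w n

/-- Conditions (C3) on a quadruple of sequences `(a, b, c, d)`. -/
structure Cond3 (w : ∀ n : ℕ, Fin n → ℝ) (Abar : ℝ) (a b c d : ℕ → ℝ) : Prop where
  sum_lito : (fun n => a n + c n) =o[atTop] fun n : ℕ => (n : ℝ)
  diff_top : Tendsto (fun n => a n - b n) atTop atTop
  d_bigO : d =O[atTop] fun n => a n - b n
  c2 : Cond2 w Abar (fun n => Real.sqrt ((a n - b n) * (a n + c n))) d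

/-- The list of component sizes, sorted in decreasing order. -/
def sizesList {n : ℕ} (G : SimpleGraph (Fin n)) : List ℕ :=
  (((comps G).val.map fun c => csize G c).sort (· ≤ ·)).reverse

/-- `kthSize G k` is the size of the `(k+1)`-st largest connected component of `G`
(`0` if there is no such component). -/
def kthSize {n : ℕ} (G : SimpleGraph (Fin n)) (k : ℕ) : ℕ := (sizesList G).getD k 0

end

/-!
The breadth-first walk is a Markov process whose state records the explored and the discovered
vertices, and a component is exhausted exactly when the queue of discovered, unexplored vertices is
empty. Exponential supermartingales show that, off an event of exponentially small probability, the
relevant statistics of this process stay close to their drifts simultaneously. When the queue is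
empty, the weight that was discovered equals the weight that was explored; writing `y = ℓ_n^{1/3}`
and `t` for the explored weight, the difference of their drifts is the parabola
`f t / y - C t² / (2 y³)`, up to the weight of the roots. Hence at such a time `t` is close either
to `0` or to `2 f y² / C`, and the component alive at time `f y² / C` starts near the first zero
and ends near the second one. The third moment enters the drift through a truncation at a level
`K`, which weak convergence controls.
-/

/-! ### Finite expectations -/

section BernoulliExpectation

variable {I J ι : Type*}

/-- The mass which the Bernoulli law of parameter `q` gives to `b`. -/
noncomputable def bernoulliMass (q : ℝ) (b : Bool) : ℝ := if b then q else 1 - q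

/-- The expectation of `F` under independent Bernoulli coordinates of parameters `q i`, as a
finite sum. -/
noncomputable def bernoulliExp [Fintype I] [DecidableEq I] (q : I → ℝ) (F : (I → Bool) → ℝ) : ℝ :=
  ∑ ω : I → Bool, (∏ i, bernoulliMass (q i) (ω i)) * F ω

lemma bernoulliMass_nonneg {q : ℝ} (h0 : 0 ≤ q) (h1 : q ≤ 1) (b : Bool) :
    0 ≤ bernoulliMass q b := by
  unfold bernoulliMass
  split_ifs <;> linarith

variable [Fintype I] [DecidableEq I]

lemma bernoulliExp_const (q : I → ℝ) (a : ℝ) : bernoulliExp q (fun _ => a) = a := by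
  have hprod := Finset.prod_univ_sum (fun _ : I => (Finset.univ : Finset Bool))
    (fun i b => bernoulliMass (q i) b)
  rw [Fintype.piFinset_univ] at hprod
  rw [bernoulliExp, ← Finset.sum_mul, ← hprod]
  simp [bernoulliMass]

lemma bernoulliExp_nonneg {q : I → ℝ} (h0 : ∀ i, 0 ≤ q i) (h1 : ∀ i, q i ≤ 1)
    {F : (I → Bool) → ℝ} (hF : ∀ ω, 0 ≤ F ω) : 0 ≤ bernoulliExp q F :=
  Finset.sum_nonneg fun ω _ => mul_nonneg
    (Finset.prod_nonneg fun i _ => bernoulliMass_nonneg (h0 i) (h1 i) _) (hF ω)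

lemma bernoulliExp_sum (q : I → ℝ) (s : Finset ι) (F : ι → (I → Bool) → ℝ) :
    bernoulliExp q (fun ω => ∑ k ∈ s, F k ω) = ∑ k ∈ s, bernoulliExp q (F k) := by
  simp only [bernoulliExp, Finset.mul_sum]
  exact Finset.sum_comm

lemma bernoulliExp_indicator_mul (q : I → ℝ) (e : I) (β : Bool) {F : (I → Bool) → ℝ}
    (hF : ∀ ω b, F (Function.update ω e b) = F ω) :
    bernoulliExp q (fun ω => (if ω e = β then 1 else 0) * F ω)
      = bernoulliMass (q e) β * bernoulliExp q F := by
  let join : Bool → ({i // i ≠ e} → Bool) → I → Bool :=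
    fun b r => (Equiv.funSplitAt e Bool).symm (b, r)
  have join_eq : ∀ b r, join b r = Function.update (join true r) e b := by
    intro b r
    funext i
    by_cases h : i = e
    · subst h; simp [join, Equiv.funSplitAt, Equiv.piSplitAt]
    · simp [join, Equiv.funSplitAt, Equiv.piSplitAt, h]
  have join_self : ∀ b r, join b r e = b := fun b r => by rw [join_eq]; simp
  have F_join : ∀ b r, F (join b r) = F (join true r) := fun b r => by rw [join_eq, hF]
  have mass_join : ∀ b r, ∏ i, bernoulliMass (q i) (join b r i)
      = bernoulliMass (q e) b * ∏ i ∈ ({e} : Finset I)ᶜ, bernoulliMass (q i) (join true r i) := by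
    intro b r
    rw [Fintype.prod_eq_mul_prod_compl e, join_self, join_eq]
    congr 1
    refine Finset.prod_congr rfl fun i hi => ?_
    rw [Function.update_of_ne (by simpa using hi)]
  have sum_join : ∀ H : (I → Bool) → ℝ, ∑ ω, H ω = ∑ r, ∑ b, H (join b r) := fun H => by
    rw [← (Equiv.funSplitAt e Bool).symm.sum_comp, Fintype.sum_prod_type_right]
  simp only [bernoulliExp, sum_join, Finset.mul_sum, mass_join, F_join, join_self]
  refine Finset.sum_congr rfl fun r _ => ?_
  cases β <;> simp [bernoulliMass] <;> ring

lemma bernoulliExp_pattern_mul (q : I → ℝ) (c : J → I) (b : J → Bool) {U : Finset J}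
    (hc : Set.InjOn c U) {F : (I → Bool) → ℝ}
    (hF : ∀ u ∈ U, ∀ ω β, F (Function.update ω (c u) β) = F ω) :
    bernoulliExp q (fun ω => (∏ u ∈ U, if ω (c u) = b u then (1 : ℝ) else 0) * F ω)
      = (∏ u ∈ U, bernoulliMass (q (c u)) (b u)) * bernoulliExp q F := by
  induction U using Finset.induction_on with
  | empty => simp
  | insert a U ha ih =>
    have ih' := ih (hc.mono (by simp)) fun u hu => hF u (Finset.mem_insert_of_mem hu)
    simp only [Finset.prod_insert ha, mul_assoc]
    rw [bernoulliExp_indicator_mul q (c a) (b a), ih']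
    intro ω β
    rw [hF a (Finset.mem_insert_self _ _)]
    congr 1
    refine Finset.prod_congr rfl fun u hu => ?_
    have hne : c u ≠ c a := fun h =>
      ha (hc (Finset.mem_coe.2 (Finset.mem_insert_of_mem hu)) (by simp) h ▸ hu)
    rw [Function.update_of_ne hne]

lemma prod_indicator_eq_decide_mem [DecidableEq J] (ω : J → Bool) {U N : Finset J}
    (hN : N ⊆ U) :
    (∏ u ∈ U, if ω u = decide (u ∈ N) then (1 : ℝ) else 0)
      = if N = U.filter (fun u => ω u = true) then 1 else 0 := by
  rw [Finset.prod_ite_zero, Finset.prod_const_one]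
  refine if_congr ⟨fun h => ?_, fun h u hu => ?_⟩ rfl rfl
  · ext u
    rw [Finset.mem_filter]
    exact ⟨fun hu => ⟨hN hu, by simpa [hu] using h u (hN hu)⟩,
      fun ⟨hu, hω⟩ => by simpa [hω] using h u hu⟩
  · rw [h]
    cases hω : ω u <;> simp [hu, hω]

lemma bernoulliExp_filter [DecidableEq J] (q : I → ℝ) (c : J → I) {U : Finset J}
    (hc : Set.InjOn c U)
    {F : Finset J → (I → Bool) → ℝ}
    (hF : ∀ N ⊆ U, ∀ u ∈ U, ∀ ω β, F N (Function.update ω (c u) β) = F N ω) :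
    bernoulliExp q (fun ω => F (U.filter fun u => ω (c u) = true) ω)
      = ∑ N ∈ U.powerset,
        ((∏ u ∈ N, q (c u)) * ∏ u ∈ U \ N, (1 - q (c u))) * bernoulliExp q (F N) := by
  have split_pattern : ∀ ω, F (U.filter fun u => ω (c u) = true) ω
      = ∑ N ∈ U.powerset,
        (∏ u ∈ U, if ω (c u) = decide (u ∈ N) then (1 : ℝ) else 0) * F N ω := by
    intro ω
    rw [Finset.sum_congr rfl fun N hN => by
      rw [prod_indicator_eq_decide_mem (fun u => ω (c u)) (Finset.mem_powerset.1 hN), ite_mul,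
        one_mul, zero_mul], Finset.sum_ite_eq', if_pos (by simp)]
  simp only [split_pattern, bernoulliExp_sum]
  refine Finset.sum_congr rfl fun N hN => ?_
  have hNU := Finset.mem_powerset.1 hN
  rw [bernoulliExp_pattern_mul q c (fun u => decide (u ∈ N)) hc (hF N hNU),
    ← Finset.prod_sdiff hNU, mul_comm (∏ u ∈ N, q (c u))]
  congr 2 <;> refine Finset.prod_congr rfl fun u hu => ?_
  · simp [bernoulliMass, (Finset.mem_sdiff.1 hu).2]
  · simp [bernoulliMass, hu]

end BernoulliExpectation

section SizeBiasedExpectation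

variable {α ι : Type*}

/-- The probability that drawing without replacement all the values of `τ`, with probabilities
proportional to their weights, yields them in the order `τ 0, τ 1, …`. -/
noncomputable def sizeBiasedMass {k : ℕ} (w : α → ℝ) (τ : Fin k → α) : ℝ :=
  ∏ i, w (τ i) / ∑ j with i ≤ j, w (τ j)

lemma sizeBiasedMass_cons (w : α → ℝ) {k : ℕ} (v : α) (τ : Fin k → α) :
    sizeBiasedMass w (Fin.cons v τ : Fin (k + 1) → α)
      = w v / (w v + ∑ j, w (τ j)) * sizeBiasedMass w τ := by
  simp only [sizeBiasedMass, Fin.prod_univ_succ, Finset.sum_filter, Fin.sum_univ_succ]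
  simp

lemma sum_comp_eq_sum_of_injective {w : α → ℝ} {k : ℕ} {τ : Fin k → α} {R : Finset α}
    (hR : R.card = k) (hτ : Function.Injective τ) (hmem : ∀ i, τ i ∈ R) :
    ∑ j, w (τ j) = ∑ u ∈ R, w u :=
  Finset.sum_bij (fun j _ => τ j) (fun j _ => hmem j) (fun _ _ _ _ h => hτ h)
    (fun u hu => by
      have hsurj := Finset.surj_on_of_inj_on_of_card_le (fun j (_ : j ∈ Finset.univ) => τ j)
        (fun j _ => hmem j) (fun _ _ _ _ h => hτ h) (by simp [hR]) u hu
      obtain ⟨j, hj, rfl⟩ := hsurj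
      exact ⟨j, hj, rfl⟩)
    fun _ _ => rfl

variable [DecidableEq α]

/-- The expectation of `F l`, where `l` is a list of `k` elements drawn from `R` one after the
other without replacement, each with probability proportional to its weight. -/
noncomputable def sizeBiasedExp (w : α → ℝ) : ℕ → Finset α → (List α → ℝ) → ℝ
  | 0, _, F => F []
  | k + 1, R, F =>
    ∑ v ∈ R, w v / (∑ u ∈ R, w u) * sizeBiasedExp w k (R.erase v) fun l => F (v :: l)

lemma sizeBiasedExp_sum (w : α → ℝ) (k : ℕ) (R : Finset α) (s : Finset ι) (a : ι → ℝ)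
    (F : ι → List α → ℝ) :
    sizeBiasedExp w k R (fun l => ∑ i ∈ s, a i * F i l)
      = ∑ i ∈ s, a i * sizeBiasedExp w k R (F i) := by
  induction k generalizing R F with
  | zero => rfl
  | succ k ih =>
    simp only [sizeBiasedExp, ih, Finset.mul_sum]
    rw [Finset.sum_comm]
    exact Finset.sum_congr rfl fun i _ => Finset.sum_congr rfl fun v _ => by ring

lemma sizeBiasedExp_const {w : α → ℝ} (hw : ∀ a, 0 < w a) {k : ℕ} {R : Finset α}
    (hR : R.card = k) (a : ℝ) : sizeBiasedExp w k R (fun _ => a) = a := by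
  induction k generalizing R with
  | zero => rfl
  | succ k ih =>
    have hne : R.Nonempty := by rw [← Finset.card_pos]; omega
    have hpos : 0 < ∑ u ∈ R, w u := Finset.sum_pos (fun u _ => hw u) hne
    rw [sizeBiasedExp, Finset.sum_congr rfl fun v hv => by
        rw [ih (R := R.erase v) (by rw [Finset.card_erase_of_mem hv, hR]; rfl)],
      ← Finset.sum_mul, ← Finset.sum_div, div_self hpos.ne', one_mul]

lemma cons_injective_and_mem_iff {k : ℕ} {v : α} {τ : Fin k → α} {R : Finset α} :
    (Function.Injective (Fin.cons v τ : Fin (k + 1) → α) ∧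
        ∀ i, (Fin.cons v τ : Fin (k + 1) → α) i ∈ R) ↔
      v ∈ R ∧ Function.Injective τ ∧ ∀ i, τ i ∈ R.erase v := by
  simp only [Fin.cons_injective_iff, Fin.forall_fin_succ, Fin.cons_zero, Fin.cons_succ,
    Finset.mem_erase, Set.mem_range, not_exists, forall_and]
  tauto

lemma sum_sizeBiasedMass_mul [Fintype α] (w : α → ℝ) {k : ℕ} {R : Finset α} (hR : R.card = k)
    (F : List α → ℝ) :
    ∑ τ : Fin k → α with Function.Injective τ ∧ ∀ i, τ i ∈ R,
      sizeBiasedMass w τ * F (List.ofFn τ) = sizeBiasedExp w k R F := by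
  simp only [Finset.sum_filter]
  induction k generalizing R F with
  | zero => simp [sizeBiasedExp, sizeBiasedMass, Function.injective_of_subsingleton]
  | succ k ih =>
    rw [← (Fin.consEquiv fun _ => α).sum_comp, Fintype.sum_prod_type, sizeBiasedExp,
      ← Finset.sum_subset (Finset.subset_univ R)]
    · refine Finset.sum_congr rfl fun v hv => ?_
      have hcard : (R.erase v).card = k := by rw [Finset.card_erase_of_mem hv, hR]; rfl
      rw [← ih hcard, Finset.mul_sum]
      refine Finset.sum_congr rfl fun τ _ => ?_
      simp only [Fin.consEquiv, Equiv.coe_fn_mk, cons_injective_and_mem_iff, hv, true_and, mul_ite,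
        mul_zero]
      refine ite_congr rfl (fun hτ => ?_) fun _ => rfl
      rw [sizeBiasedMass_cons, sum_comp_eq_sum_of_injective hcard hτ.1 hτ.2,
        Finset.add_sum_erase R w hv, List.ofFn_cons, mul_assoc]
    · intro v _ hv
      simp [Fin.consEquiv, cons_injective_and_mem_iff, hv]

lemma sum_perm_sizeBiasedMass {n : ℕ} (w : Fin n → ℝ) (F : List (Fin n) → ℝ) :
    ∑ σ : Equiv.Perm (Fin n), (∏ i : Fin n,
        w (σ i) / ((∑ k, w k) - ∑ k ∈ Finset.univ.filter fun k => k < i, w (σ k)))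
        * F (List.ofFn σ) = sizeBiasedExp w n Finset.univ F := by
  rw [← sum_sizeBiasedMass_mul w (by simp) F]
  refine Finset.sum_bij' (fun σ _ => ⇑σ)
    (fun τ h => Equiv.ofBijective τ (Finite.injective_iff_bijective.1 (Finset.mem_filter.1 h).2.1))
    (fun σ _ => by simp [σ.injective]) (fun τ h => by simp) (fun σ _ => by ext; simp)
    (fun τ h => rfl) fun σ _ => ?_
  unfold sizeBiasedMass
  congr! 3 with i
  rw [← Equiv.sum_comp σ w, ← Finset.sum_filter_add_sum_filter_not Finset.univ (fun k => k < i)]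
  simp

lemma prod_sizeBiased_nonneg {n : ℕ} {w : Fin n → ℝ} (hw : ∀ i, 0 ≤ w i)
    (σ : Equiv.Perm (Fin n)) :
    0 ≤ ∏ i : Fin n,
      w (σ i) / ((∑ k, w k) - ∑ k ∈ Finset.univ.filter fun k => k < i, w (σ k)) := by
  refine Finset.prod_nonneg fun i _ => div_nonneg (hw _) ?_
  rw [← Equiv.sum_comp σ w, sub_nonneg]
  exact Finset.sum_le_sum_of_subset_of_nonneg (Finset.filter_subset _ _) fun k _ _ => hw _

end SizeBiasedExpectation

/-! ### The exploration of the graph -/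

section Exploration

variable {n : ℕ}

/-- What a potential sees of the exploration of a graph: the explored vertices, the queue of
discovered but unexplored vertices and the number of roots chosen so far. -/
structure Exploration (n : ℕ) where
  explored : Finset (Fin n)
  queue : Finset (Fin n)
  roots : ℕ

/-- A state of the exploration, which consists of an `Exploration` and of the part of the
size-biased order that has not been read yet when looking for roots. -/
structure ExplorationState (n : ℕ) extends Exploration n where
  unread : List (Fin n)

/-- The set of vertices which have been discovered, be they explored or not. -/
def Exploration.discovered (e : Exploration n) : Finset (Fin n) := e.explored ∪ e.queue

/-- The exploration of the vertex `x` with set of children `N`. -/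
def Exploration.explore (e : Exploration n) (x : Fin n) (N : Finset (Fin n)) : Exploration n :=
  ⟨insert x e.explored, e.queue.erase x ∪ N, e.roots⟩

/-- The choice of `v` as new root when the queue is empty. -/
def Exploration.addRoot (e : Exploration n) (v : Fin n) : Exploration n :=
  ⟨e.explored, {v}, e.roots + 1⟩

/-- The children of `x` in the exploration of `G`. -/
noncomputable def Exploration.children (G : SimpleGraph (Fin n)) (e : Exploration n) (x : Fin n) :
    Finset (Fin n) :=
  e.discoveredᶜ.filter (G.Adj x)

/-- The step taken when the queue is empty: one entry of the size-biased order is read, and it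
becomes a root unless it has already been explored. -/
noncomputable def Exploration.readRoot (e : Exploration n) : List (Fin n) → ExplorationState n
  | [] => ⟨e, []⟩
  | v :: l => if v ∈ e.explored then ⟨e, l⟩ else ⟨e.addRoot v, l⟩

/-- One step of the exploration of `G`. The order in which the vertices of the queue are explored
has no influence on the times at which the queue is empty, so the least one is explored. -/
noncomputable def ExplorationState.step (G : SimpleGraph (Fin n)) (s : ExplorationState n) :
    ExplorationState n :=
  if h : s.queue.Nonempty then
    ⟨s.explore (s.queue.min' h) (s.children G (s.queue.min' h)), s.unread⟩
  else s.readRoot s.unread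

/-- Within `k` steps the exploration of `G` reaches `Bad`, and it stays in `S` before that. -/
def ExplorationState.Hits (G : SimpleGraph (Fin n)) (Bad S : Exploration n → Prop) (k : ℕ)
    (s : ExplorationState n) : Prop :=
  ∃ j ≤ k, Bad ((step G)^[j] s).toExploration ∧ ∀ i < j, S ((step G)^[i] s).toExploration

lemma Exploration.disjoint_explore {e : Exploration n} {N : Finset (Fin n)} {x : Fin n}
    (h : Disjoint e.explored e.queue) (hx : x ∈ e.queue) (hN : N ⊆ e.discoveredᶜ) :
    Disjoint (e.explore x N).explored (e.explore x N).queue := by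
  have hN' : ∀ u ∈ N, u ∉ e.explored ∧ u ∉ e.queue := fun u hu => by
    simpa [discovered] using hN hu
  simp only [explore, Finset.disjoint_insert_left, Finset.disjoint_union_right]
  exact ⟨⟨Finset.notMem_erase x _, h.mono_right (Finset.erase_subset _ _)⟩,
    fun hxN => (hN' x hxN).2 hx, Finset.disjoint_right.2 fun u hu => (hN' u hu).1⟩

lemma Exploration.discovered_explore {e : Exploration n} {x : Fin n} (hx : x ∈ e.queue)
    (N : Finset (Fin n)) : (e.explore x N).discovered = e.discovered ∪ N := by
  ext u
  by_cases hu : u = x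
  · subst hu
    simp [explore, discovered, hx]
  · simp [explore, discovered, hu]

lemma Exploration.children_subset (G : SimpleGraph (Fin n)) (e : Exploration n) (x : Fin n) :
    e.children G x ⊆ e.discoveredᶜ :=
  Finset.filter_subset _ _

lemma Exploration.children_congr {G G' : SimpleGraph (Fin n)} {e : Exploration n} {x : Fin n}
    (hx : x ∉ e.explored)
    (hG : ∀ a b, a ∉ e.explored → b ∉ e.explored → (G.Adj a b ↔ G'.Adj a b)) :
    e.children G x = e.children G' x :=
  Finset.filter_congr fun u hu => hG x u hx (by
    simp only [discovered, Finset.mem_compl, Finset.mem_union, not_or] at hu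
    exact hu.1)

namespace ExplorationState

lemma step_of_nonempty (G : SimpleGraph (Fin n)) {s : ExplorationState n}
    (h : s.queue.Nonempty) :
    s.step G = ⟨s.explore (s.queue.min' h) (s.children G (s.queue.min' h)), s.unread⟩ :=
  dif_pos h

lemma step_of_queue_eq_empty (G : SimpleGraph (Fin n)) {s : ExplorationState n}
    (h : s.queue = ∅) : s.step G = s.readRoot s.unread :=
  dif_neg (by simp [h])

lemma disjoint_step (G : SimpleGraph (Fin n)) {s : ExplorationState n}
    (h : Disjoint s.explored s.queue) : Disjoint (s.step G).explored (s.step G).queue := by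
  rcases s.queue.eq_empty_or_nonempty with hQ | hQ
  · rw [step_of_queue_eq_empty G hQ]
    cases s.unread with
    | nil => exact h
    | cons v l =>
      simp only [Exploration.readRoot]
      split_ifs with hv
      · exact h
      · simpa [Exploration.addRoot] using hv
  · rw [step_of_nonempty G hQ]
    exact Exploration.disjoint_explore h (s.queue.min'_mem hQ) (Exploration.children_subset _ _ _)

lemma explored_subset_step (G : SimpleGraph (Fin n)) (s : ExplorationState n) :
    s.explored ⊆ (s.step G).explored := by
  rcases s.queue.eq_empty_or_nonempty with hQ | hQ
  · rw [step_of_queue_eq_empty G hQ]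
    cases s.unread with
    | nil => rfl
    | cons v l =>
      simp only [Exploration.readRoot]
      split_ifs <;> rfl
  · rw [step_of_nonempty G hQ]
    exact Finset.subset_insert _ _

variable {Bad S : Exploration n → Prop}

lemma hits_zero (G : SimpleGraph (Fin n)) (s : ExplorationState n) :
    s.Hits G Bad S 0 ↔ Bad s.toExploration := by
  simp [Hits]

lemma hits_succ (G : SimpleGraph (Fin n)) (k : ℕ) (s : ExplorationState n) :
    s.Hits G Bad S (k + 1) ↔
      Bad s.toExploration ∨ S s.toExploration ∧ (s.step G).Hits G Bad S k := by
  constructor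
  · rintro ⟨_ | j, hj, hbad, hS⟩
    · exact .inl hbad
    · exact .inr ⟨hS 0 j.succ_pos, j, by omega, hbad, fun i hi => hS (i + 1) (by omega)⟩
  · rintro (h | ⟨h, j, hj, hbad, hS⟩)
    · exact ⟨0, by omega, h, by simp⟩
    · refine ⟨j + 1, by omega, hbad, fun i hi => ?_⟩
      cases i with
      | zero => exact h
      | succ i => exact hS i (by omega)

lemma hits_congr {G G' : SimpleGraph (Fin n)} (k : ℕ) {s : ExplorationState n}
    (hs : Disjoint s.explored s.queue)
    (hG : ∀ a b, a ∉ s.explored → b ∉ s.explored → (G.Adj a b ↔ G'.Adj a b)) :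
    s.Hits G Bad S k ↔ s.Hits G' Bad S k := by
  induction k generalizing s with
  | zero => rw [hits_zero, hits_zero]
  | succ k ih =>
    have hstep : s.step G = s.step G' := by
      rcases s.queue.eq_empty_or_nonempty with hQ | hQ
      · rw [step_of_queue_eq_empty G hQ, step_of_queue_eq_empty G' hQ]
      · rw [step_of_nonempty G hQ, step_of_nonempty G' hQ, Exploration.children_congr
          (Finset.disjoint_right.1 hs (s.queue.min'_mem hQ)) hG]
    have hsub := explored_subset_step G' s
    rw [hits_succ, hits_succ, hstep, ih (disjoint_step G' hs) fun a b ha hb =>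
      hG a b (fun h => ha (hsub h)) fun h => hb (hsub h)]

end ExplorationState

end Exploration

/-! ### Supermartingales along the exploration -/

section Supermartingale

variable {n : ℕ} {w : Fin n → ℝ} {p : ℝ}

/-- The probability that `x` and `u` are adjacent in `G(W,p)`. -/
noncomputable def edgeProb (w : Fin n → ℝ) (p : ℝ) (x u : Fin n) : ℝ :=
  1 - Real.exp (-(w x * w u * p))

lemma edgeProb_nonneg (hw : ∀ i, 0 < w i) (hp : 0 ≤ p) (x u : Fin n) : 0 ≤ edgeProb w p x u := by
  rw [edgeProb, sub_nonneg, Real.exp_le_one_iff, neg_nonpos]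
  exact mul_nonneg (mul_nonneg (hw x).le (hw u).le) hp

lemma edgeProb_le_one (w : Fin n → ℝ) (p : ℝ) (x u : Fin n) : edgeProb w p x u ≤ 1 :=
  sub_le_self _ (Real.exp_pos _).le

lemma edgeProb_comm (w : Fin n → ℝ) (p : ℝ) (x u : Fin n) :
    edgeProb w p x u = edgeProb w p u x := by
  rw [edgeProb, edgeProb, mul_comm (w x)]

/-- The index of the edge `{x, u}` among the edge indicators. -/
def edgeIndex (x u : Fin n) : Fin n × Fin n := (min x u, max x u)

lemma eq_and_eq_or_of_edgeIndex_eq {x u a b : Fin n} (h : edgeIndex a b = edgeIndex x u) :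
    a = x ∧ b = u ∨ a = u ∧ b = x := by
  simp only [edgeIndex, Prod.mk.injEq] at h
  grind

lemma edgeIndex_injective (x : Fin n) : Function.Injective (edgeIndex x) := fun a b h => by
  rcases eq_and_eq_or_of_edgeIndex_eq h with h | h
  · exact h.2
  · exact h.2.trans h.1

lemma edgeProb_edgeIndex (w : Fin n → ℝ) (p : ℝ) (x u : Fin n) :
    edgeProb w p (edgeIndex x u).1 (edgeIndex x u).2 = edgeProb w p x u := by
  rcases le_total x u with h | h
  · simp [edgeIndex, h]
  · simp [edgeIndex, h, edgeProb_comm w p u x]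

/-- The graph given by edge indicators indexed by pairs. -/
def sampleGraph (ω : Fin n × Fin n → Bool) : SimpleGraph (Fin n) := graphOf fun i j => ω (i, j)

lemma sampleGraph_adj (ω : Fin n × Fin n → Bool) (a b : Fin n) :
    (sampleGraph ω).Adj a b ↔ a ≠ b ∧ ω (edgeIndex a b) = true := by
  rw [sampleGraph, graphOf, SimpleGraph.fromRel_adj, edgeIndex, min_comm b a, max_comm b a,
    or_self]

lemma sampleGraph_update_adj (ω : Fin n × Fin n → Bool) {x a b : Fin n} (u : Fin n) (β : Bool)
    (ha : a ≠ x) (hb : b ≠ x) :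
    (sampleGraph (Function.update ω (edgeIndex x u) β)).Adj a b ↔ (sampleGraph ω).Adj a b := by
  rw [sampleGraph_adj, sampleGraph_adj, Function.update_of_ne]
  intro h
  rcases eq_and_eq_or_of_edgeIndex_eq h with h | h
  · exact ha h.1
  · exact hb h.2

lemma children_sampleGraph (ω : Fin n × Fin n → Bool) {e : Exploration n} {x : Fin n}
    (hx : x ∈ e.queue) :
    e.children (sampleGraph ω) x = e.discoveredᶜ.filter fun u => ω (edgeIndex x u) = true := by
  refine Finset.filter_congr fun u hu => ?_
  have hxu : x ≠ u := by
    rintro rfl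
    simp [Exploration.discovered, hx] at hu
  simp [sampleGraph_adj, hxu]

/-- The probability that the children of `x` are the elements of `N`, when `U` is the set of
undiscovered vertices. -/
noncomputable def childrenProb (w : Fin n → ℝ) (p : ℝ) (x : Fin n) (U N : Finset (Fin n)) : ℝ :=
  (∏ u ∈ N, edgeProb w p x u) * ∏ u ∈ U \ N, (1 - edgeProb w p x u)

lemma childrenProb_nonneg (hw : ∀ i, 0 < w i) (hp : 0 ≤ p) (x : Fin n) (U N : Finset (Fin n)) :
    0 ≤ childrenProb w p x U N :=
  mul_nonneg (Finset.prod_nonneg fun u _ => edgeProb_nonneg hw hp x u)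
    (Finset.prod_nonneg fun u _ => sub_nonneg.2 (edgeProb_le_one w p x u))

/-- The function `Φ` of the exploration of `G(W,p)` does not increase in mean during the steps
that start in `S`, whether such a step explores a vertex or chooses a root. -/
structure IsSupermartingaleOn (w : Fin n → ℝ) (p : ℝ) (Φ : Exploration n → ℝ)
    (S : Exploration n → Prop) : Prop where
  explore : ∀ e, S e → Disjoint e.explored e.queue → ∀ x ∈ e.queue,
    ∑ N ∈ e.discoveredᶜ.powerset, childrenProb w p x e.discoveredᶜ N * Φ (e.explore x N) ≤ Φ e
  root : ∀ e, S e → e.queue = ∅ →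
    ∑ v ∈ e.exploredᶜ, w v * Φ (e.addRoot v) ≤ (∑ v ∈ e.exploredᶜ, w v) * Φ e

lemma IsSupermartingaleOn.sum {ι : Type*} {t : Finset ι} {Φ : ι → Exploration n → ℝ}
    {S : Exploration n → Prop} (h : ∀ i ∈ t, IsSupermartingaleOn w p (Φ i) S) :
    IsSupermartingaleOn w p (fun e => ∑ i ∈ t, Φ i e) S where
  explore e he hd x hx := by
    simp only [Finset.mul_sum]
    rw [Finset.sum_comm]
    exact Finset.sum_le_sum fun i hi => (h i hi).explore e he hd x hx
  root e he hQ := by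
    simp only [Finset.mul_sum]
    rw [Finset.sum_comm]
    exact Finset.sum_le_sum fun i hi => (h i hi).root e he hQ

/-- The probability that the exploration of `G(W,p)` started at `e` hits `Bad` within `k` steps
while staying in `S`, when the elements of `R` are still to be read in size-biased order. -/
noncomputable def hitProb (w : Fin n → ℝ) (p : ℝ) (Bad S : Exploration n → Prop) (k : ℕ)
    (R : Finset (Fin n)) (e : Exploration n) : ℝ :=
  sizeBiasedExp w R.card R fun l =>
    bernoulliExp (fun i : Fin n × Fin n => edgeProb w p i.1 i.2) fun ω =>
      if (ExplorationState.mk e l).Hits (sampleGraph ω) Bad S k then 1 else 0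

variable {Bad S : Exploration n → Prop} {k : ℕ} {R : Finset (Fin n)} {e : Exploration n}

lemma hitProb_eq_const {a : ℝ} (hw : ∀ i, 0 < w i)
    (h : ∀ G l, (if (ExplorationState.mk e l).Hits G Bad S k then (1 : ℝ) else 0) = a) :
    hitProb w p Bad S k R e = a := by
  simp only [hitProb, h, bernoulliExp_const, sizeBiasedExp_const hw rfl]

lemma bernoulliExp_hits_explore (hd : Disjoint e.explored e.queue) {x : Fin n} (hx : x ∈ e.queue)
    (l : List (Fin n)) :
    bernoulliExp (fun i : Fin n × Fin n => edgeProb w p i.1 i.2) (fun ω =>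
        if (ExplorationState.mk (e.explore x (e.children (sampleGraph ω) x)) l).Hits
          (sampleGraph ω) Bad S k then 1 else 0)
      = ∑ N ∈ e.discoveredᶜ.powerset, childrenProb w p x e.discoveredᶜ N *
          bernoulliExp (fun i : Fin n × Fin n => edgeProb w p i.1 i.2) fun ω =>
            if (ExplorationState.mk (e.explore x N) l).Hits (sampleGraph ω) Bad S k
            then 1 else 0 := by
  have hfilter := bernoulliExp_filter (fun i : Fin n × Fin n => edgeProb w p i.1 i.2)
    (edgeIndex x) (U := e.discoveredᶜ) (edgeIndex_injective x).injOn
    (F := fun N ω =>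
      if (ExplorationState.mk (e.explore x N) l).Hits (sampleGraph ω) Bad S k then 1 else 0)
    fun N hN u _ ω β => if_congr (ExplorationState.hits_congr k
      (Exploration.disjoint_explore hd hx hN) fun a b ha hb =>
        sampleGraph_update_adj ω u β (ne_of_mem_of_not_mem (Finset.mem_insert_self _ _) ha).symm
          (ne_of_mem_of_not_mem (Finset.mem_insert_self _ _) hb).symm) rfl rfl
  simp only [edgeProb_edgeIndex] at hfilter
  simp only [children_sampleGraph _ hx, childrenProb]
  convert hfilter

lemma hitProb_succ_of_nonempty (hbad : ¬ Bad e) (hS : S e) (hd : Disjoint e.explored e.queue)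
    (hQ : e.queue.Nonempty) :
    hitProb w p Bad S (k + 1) R e
      = ∑ N ∈ e.discoveredᶜ.powerset, childrenProb w p (e.queue.min' hQ) e.discoveredᶜ N *
          hitProb w p Bad S k R (e.explore (e.queue.min' hQ) N) := by
  simp only [hitProb, ← sizeBiasedExp_sum, ← bernoulliExp_hits_explore hd (e.queue.min'_mem hQ),
    ExplorationState.hits_succ, hbad, hS, false_or, true_and]
  simp only [ExplorationState.step, dif_pos hQ]

lemma hitProb_succ_of_queue_eq_empty (hbad : ¬ Bad e) (hS : S e) (hQ : e.queue = ∅)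
    (hR : R.Nonempty) :
    hitProb w p Bad S (k + 1) R e
      = ∑ v ∈ R, w v / (∑ u ∈ R, w u) *
          hitProb w p Bad S k (R.erase v) (if v ∈ e.explored then e else e.addRoot v) := by
  obtain ⟨r, hr⟩ := Nat.exists_eq_succ_of_ne_zero hR.card_pos.ne'
  have hstep : ∀ G l, (ExplorationState.mk e l).step G = e.readRoot l := fun G l =>
    ExplorationState.step_of_queue_eq_empty G hQ
  simp only [hitProb, ExplorationState.hits_succ, hbad, hS, false_or, true_and, hstep, hr,
    sizeBiasedExp]
  refine Finset.sum_congr rfl fun v hv => ?_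
  have hcard : (R.erase v).card = r := by rw [Finset.card_erase_of_mem hv, hr]; rfl
  rw [hcard]
  by_cases hve : v ∈ e.explored <;> simp only [Exploration.readRoot, hve, if_true, if_false]

lemma hitProb_succ_of_unread_eq_empty (hbad : ¬ Bad e) (hS : S e) (hQ : e.queue = ∅) :
    hitProb w p Bad S (k + 1) ∅ e = hitProb w p Bad S k ∅ e := by
  have hstep : ∀ G l, (ExplorationState.mk e l).step G = e.readRoot l := fun G l =>
    ExplorationState.step_of_queue_eq_empty G hQ
  simp only [hitProb, ExplorationState.hits_succ, hbad, hS, false_or, true_and, hstep,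
    Finset.card_empty, sizeBiasedExp, Exploration.readRoot]

lemma IsSupermartingaleOn.sum_root_le {Φ : Exploration n → ℝ} (h : IsSupermartingaleOn w p Φ S)
    (hS : S e) (hQ : e.queue = ∅) (hR : e.exploredᶜ ⊆ R) :
    ∑ v ∈ R, w v * Φ (if v ∈ e.explored then e else e.addRoot v) ≤ (∑ v ∈ R, w v) * Φ e := by
  rw [← Finset.sum_sdiff hR, ← Finset.sum_sdiff hR, add_mul, Finset.sum_mul]
  refine add_le_add (Finset.sum_le_sum fun v hv => ?_) ((h.root e hS hQ).trans' ?_)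
  · rw [if_pos (by simpa using (Finset.mem_sdiff.1 hv).2)]
  · exact Finset.sum_le_sum fun v hv => by rw [if_neg (by simpa using hv)]

lemma IsSupermartingaleOn.hitProb_succ_le_of_nonempty {Φ : Exploration n → ℝ}
    (hw : ∀ i, 0 < w i) (hp : 0 ≤ p) (hΦ : IsSupermartingaleOn w p Φ S)
    (ih : ∀ {R : Finset (Fin n)} {e : Exploration n}, Disjoint e.explored e.queue →
      e.discoveredᶜ ⊆ R → hitProb w p Bad S k R e ≤ Φ e)
    (hbad : ¬ Bad e) (hS : S e) (hQ : e.queue.Nonempty) (hd : Disjoint e.explored e.queue)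
    (hR : e.discoveredᶜ ⊆ R) : hitProb w p Bad S (k + 1) R e ≤ Φ e := by
  have hx := e.queue.min'_mem hQ
  rw [hitProb_succ_of_nonempty hbad hS hd hQ]
  refine le_trans (Finset.sum_le_sum fun N hN => mul_le_mul_of_nonneg_left (ih ?_ ?_)
    (childrenProb_nonneg hw hp _ _ _)) (hΦ.explore e hS hd _ hx)
  · exact Exploration.disjoint_explore hd hx (Finset.mem_powerset.1 hN)
  · rw [Exploration.discovered_explore hx, Finset.compl_union]
    exact Finset.inter_subset_left.trans hR

lemma IsSupermartingaleOn.hitProb_succ_le_of_queue_eq_empty {Φ : Exploration n → ℝ}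
    (hw : ∀ i, 0 < w i) (hΦ : IsSupermartingaleOn w p Φ S)
    (ih : ∀ {R : Finset (Fin n)} {e : Exploration n}, Disjoint e.explored e.queue →
      e.discoveredᶜ ⊆ R → hitProb w p Bad S k R e ≤ Φ e)
    (hbad : ¬ Bad e) (hS : S e) (hQ : e.queue = ∅) (hR : e.exploredᶜ ⊆ R) :
    hitProb w p Bad S (k + 1) R e ≤ Φ e := by
  have hdisc : e.discovered = e.explored := by simp [Exploration.discovered, hQ]
  rcases R.eq_empty_or_nonempty with rfl | hne
  · rw [hitProb_succ_of_unread_eq_empty hbad hS hQ]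
    exact ih (by simp [hQ]) (by rwa [hdisc])
  have hpos : 0 < ∑ u ∈ R, w u := Finset.sum_pos (fun u _ => hw u) hne
  rw [hitProb_succ_of_queue_eq_empty hbad hS hQ hne]
  simp only [div_mul_eq_mul_div, ← Finset.sum_div]
  rw [div_le_iff₀' hpos]
  refine le_trans (Finset.sum_le_sum fun v _ => mul_le_mul_of_nonneg_left (ih ?_ ?_) (hw v).le)
    (hΦ.sum_root_le hS hQ hR)
  · split_ifs with hv
    · simp [hQ]
    · simpa [Exploration.addRoot] using hv
  · refine Finset.subset_erase.2 ⟨Finset.Subset.trans ?_ hR, ?_⟩ <;> split_ifs with hv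
    · rw [hdisc]
    · simp [Exploration.discovered, Exploration.addRoot, Finset.erase_subset]
    · simp [hdisc, hv]
    · simp [Exploration.discovered, Exploration.addRoot]

theorem IsSupermartingaleOn.hitProb_le {Φ : Exploration n → ℝ} (hw : ∀ i, 0 < w i) (hp : 0 ≤ p)
    (hΦ : IsSupermartingaleOn w p Φ S) (h0 : ∀ e, 0 ≤ Φ e) (hbad : ∀ e, Bad e → 1 ≤ Φ e)
    (hd : Disjoint e.explored e.queue) (hR : e.discoveredᶜ ⊆ R) :
    hitProb w p Bad S k R e ≤ Φ e := by
  have of_bad : ∀ {k R e}, Bad e → hitProb w p Bad S k R e ≤ Φ e := fun {k R e} hb => by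
    rw [hitProb_eq_const hw fun G l => if_pos ⟨0, k.zero_le, hb, by simp⟩]
    exact hbad e hb
  induction k generalizing e R with
  | zero =>
    by_cases hb : Bad e
    · exact of_bad hb
    · rw [hitProb_eq_const hw fun G l => if_neg (by simpa [ExplorationState.hits_zero] using hb)]
      exact h0 e
  | succ k ih =>
    by_cases hb : Bad e
    · exact of_bad hb
    by_cases hS : S e; swap
    · rw [hitProb_eq_const hw fun G l => if_neg (by simp [ExplorationState.hits_succ, hb, hS])]
      exact h0 e
    rcases e.queue.eq_empty_or_nonempty with hQ | hQ
    · exact hΦ.hitProb_succ_le_of_queue_eq_empty hw ih hb hS hQ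
        (by simpa [Exploration.discovered, hQ] using hR)
    · exact hΦ.hitProb_succ_le_of_nonempty hw hp ih hb hS hQ hd hR

end Supermartingale

section Law

variable {n : ℕ} {w : Fin n → ℝ} {p : ℝ}

lemma bern_singleton (q : ℝ) (b : Bool) : bern q {b} = ENNReal.ofReal (bernoulliMass q b) := by
  cases b <;> simp [bern, bernoulliMass]

instance bern.instIsFiniteMeasure (q : ℝ) : IsFiniteMeasure (bern q) := ⟨by simp [bern]⟩

lemma bernoulliMass_edgeProb_nonneg (hw : ∀ i, 0 < w i) (hp : 0 ≤ p) (x u : Fin n) (b : Bool) :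
    0 ≤ bernoulliMass (edgeProb w p x u) b :=
  bernoulliMass_nonneg (edgeProb_nonneg hw hp x u) (edgeProb_le_one w p x u) b

lemma graphMeasure_singleton (hw : ∀ i, 0 < w i) (hp : 0 ≤ p) (g : Fin n → Fin n → Bool) :
    graphMeasure n w p {g}
      = ENNReal.ofReal (∏ e : Fin n × Fin n, bernoulliMass (edgeProb w p e.1 e.2) (g e.1 e.2)) := by
  have hq := bernoulliMass_edgeProb_nonneg hw hp
  simp only [graphMeasure, Measure.pi_singleton, bern_singleton]
  rw [Fintype.prod_prod_type, ENNReal.ofReal_prod_of_nonneg fun i _ =>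
    Finset.prod_nonneg fun j _ => hq i j _]
  refine Finset.prod_congr rfl fun i _ => ?_
  rw [ENNReal.ofReal_prod_of_nonneg fun j _ => hq i j _]
  rfl

lemma graphMeasure_eq_bernoulliExp (hw : ∀ i, 0 < w i) (hp : 0 ≤ p)
    (T : Set (Fin n → Fin n → Bool)) :
    graphMeasure n w p T
      = ENNReal.ofReal (bernoulliExp (fun e : Fin n × Fin n => edgeProb w p e.1 e.2) fun ω =>
          if (fun i j => ω (i, j)) ∈ T then 1 else 0) := by
  have hsum : graphMeasure n w p T = ∑ g ∈ T.toFinset, graphMeasure n w p {g} := by simp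
  simp only [hsum, graphMeasure_singleton hw hp]
  rw [← ENNReal.ofReal_sum_of_nonneg fun g _ => Finset.prod_nonneg fun e _ =>
    bernoulliMass_edgeProb_nonneg hw hp _ _ _, bernoulliExp,
    ← (Equiv.curry (Fin n) (Fin n) Bool).symm.sum_comp]
  simp only [Equiv.curry_symm_apply, Function.uncurry, mul_ite, mul_one, mul_zero,
    ← Set.mem_toFinset (s := T), Finset.sum_ite_mem, Finset.univ_inter]

lemma expMeasure'_eq_sizeBiasedExp (hw : ∀ i, 0 < w i) (hp : 0 ≤ p)
    (P : SimpleGraph (Fin n) → List (Fin n) → Prop) :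
    expMeasure' n w p {ω | P (graphOf ω.1) (List.ofFn ω.2)}
      = ENNReal.ofReal (sizeBiasedExp w n Finset.univ fun l =>
          bernoulliExp (fun e : Fin n × Fin n => edgeProb w p e.1 e.2) fun ω =>
            if P (sampleGraph ω) l then 1 else 0) := by
  have hnonneg := prod_sizeBiased_nonneg fun i => (hw i).le
  rw [expMeasure', Measure.sum_apply _ (Set.toFinite _).measurableSet, tsum_fintype,
    ← sum_perm_sizeBiasedMass, ENNReal.ofReal_sum_of_nonneg fun σ _ =>
      mul_nonneg (hnonneg σ) (bernoulliExp_nonneg (fun _ => edgeProb_nonneg hw hp _ _)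
        (fun _ => edgeProb_le_one _ _ _ _) fun ω => by split_ifs <;> norm_num)]
  refine Finset.sum_congr rfl fun σ _ => ?_
  rw [Measure.smul_apply, Measure.map_apply (measurable_of_countable _)
    (Set.toFinite _).measurableSet, graphMeasure_eq_bernoulliExp hw hp, smul_eq_mul,
    ENNReal.ofReal_mul (hnonneg σ)]
  rfl

/-- The state of the exploration before its first step. -/
def ExplorationState.init (l : List (Fin n)) : ExplorationState n := ⟨⟨∅, ∅, 0⟩, l⟩

theorem IsSupermartingaleOn.measure_hits_le {Bad S : Exploration n → Prop}
    {Φ : Exploration n → ℝ} (hΦ : IsSupermartingaleOn w p Φ S) (hw : ∀ i, 0 < w i) (hp : 0 ≤ p)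
    (h0 : ∀ e, 0 ≤ Φ e) (hbad : ∀ e, Bad e → 1 ≤ Φ e) :
    expMeasure' n w p
        {ω | ∃ k, (ExplorationState.init (List.ofFn ω.2)).Hits (graphOf ω.1) Bad S k}
      ≤ ENNReal.ofReal (Φ ⟨∅, ∅, 0⟩) := by
  rw [Set.ofPred_exists, Monotone.measure_iUnion]
  · refine iSup_le fun k => ?_
    rw [expMeasure'_eq_sizeBiasedExp hw hp fun G l =>
      (ExplorationState.init l).Hits G Bad S k]
    refine ENNReal.ofReal_le_ofReal ?_
    have hle := hΦ.hitProb_le (k := k) hw hp h0 hbad (e := ⟨∅, ∅, 0⟩) (R := Finset.univ)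
      (Finset.disjoint_empty_left _) (Finset.subset_univ _)
    rwa [hitProb, Finset.card_univ, Fintype.card_fin] at hle
  · exact fun k k' hk ω ⟨j, hj, h⟩ => ⟨j, hj.trans hk, h⟩

end Law

/-! ### Components and the exploration -/

section Components

variable {n : ℕ} {G : SimpleGraph (Fin n)}

/-- The vertices which can be reached in `G` from the set `A`. -/
noncomputable def reachableFrom (G : SimpleGraph (Fin n)) (A : Finset (Fin n)) : Finset (Fin n) :=
  Finset.univ.filter fun u => ∃ v ∈ A, G.Reachable v u

lemma mem_reachableFrom {A : Finset (Fin n)} {u : Fin n} :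
    u ∈ reachableFrom G A ↔ ∃ v ∈ A, G.Reachable v u := by
  simp [reachableFrom]

lemma subset_reachableFrom (A : Finset (Fin n)) : A ⊆ reachableFrom G A := fun u hu =>
  mem_reachableFrom.2 ⟨u, hu, .refl u⟩

lemma reachableFrom_union_of_subset {A N : Finset (Fin n)} (h : N ⊆ reachableFrom G A) :
    reachableFrom G (A ∪ N) = reachableFrom G A := by
  ext u
  simp only [mem_reachableFrom, Finset.mem_union]
  constructor
  · rintro ⟨v, hv | hv, hvu⟩
    · exact ⟨v, hv, hvu⟩
    · obtain ⟨a, ha, hav⟩ := mem_reachableFrom.1 (h hv)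
      exact ⟨a, ha, hav.trans hvu⟩
  · rintro ⟨v, hv, hvu⟩
    exact ⟨v, .inl hv, hvu⟩

lemma reachableFrom_eq_self {A : Finset (Fin n)} (h : ∀ a ∈ A, ∀ b, G.Adj a b → b ∈ A) :
    reachableFrom G A = A := by
  refine Finset.Subset.antisymm (fun u hu => ?_) (subset_reachableFrom A)
  obtain ⟨v, hv, ⟨walk⟩⟩ := mem_reachableFrom.1 hu
  clear hu
  induction walk with
  | nil => exact hv
  | cons hadj _ ih => exact ih (h _ hv _ hadj)

namespace ExplorationState

theorem exists_iterate_step_eq (s : ExplorationState n) (hd : Disjoint s.explored s.queue)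
    (hclosed : ∀ a ∈ s.explored, ∀ b, G.Adj a b → b ∈ s.discovered) :
    ∃ j, (step G)^[j] s = ⟨⟨reachableFrom G s.discovered, ∅, s.roots⟩, s.unread⟩ := by
  induction hr : s.exploredᶜ.card using Nat.strong_induction_on generalizing s with
  | _ r ih =>
    rcases s.queue.eq_empty_or_nonempty with hQ | hQ
    · have hdisc : s.discovered = s.explored := by simp [Exploration.discovered, hQ]
      refine ⟨0, ?_⟩
      rw [hdisc, reachableFrom_eq_self (by simpa only [hdisc] using hclosed), ← hQ]
      rfl
    set x := s.queue.min' hQ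
    have hx : x ∈ s.queue := s.queue.min'_mem hQ
    have hxs : x ∈ s.discovered := Finset.mem_union_right _ hx
    have hxe : x ∉ s.explored := Finset.disjoint_right.1 hd hx
    have hstep : s.step G = ⟨s.explore x (s.children G x), s.unread⟩ := step_of_nonempty G hQ
    have hdisc := Exploration.discovered_explore hx (s.children G x)
    have hchildren : s.children G x ⊆ reachableFrom G s.discovered := fun u hu =>
      mem_reachableFrom.2 ⟨x, hxs, (Finset.mem_filter.1 hu).2.reachable⟩
    obtain ⟨j, hj⟩ := ih _ (by
        rw [← hr, hstep]
        exact Finset.card_lt_card (Finset.compl_ssubset_compl.2 (Finset.ssubset_insert hxe)))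
      (s.step G) (disjoint_step G hd) (by
        rw [hstep, hdisc]
        rintro a ha b hab
        rw [Finset.mem_union]
        rcases Finset.mem_insert.1 ha with rfl | ha
        · by_cases hb : b ∈ s.discovered
          · exact .inl hb
          · exact .inr (Finset.mem_filter.2 ⟨Finset.mem_compl.2 hb, hab⟩)
        · exact .inl (hclosed a ha b hab)) rfl
    refine ⟨j + 1, ?_⟩
    rw [Function.iterate_succ_apply, hj, hstep, hdisc, reachableFrom_union_of_subset hchildren]
    rfl

lemma roots_step (G : SimpleGraph (Fin n)) (s : ExplorationState n) :
    (s.step G).roots = s.roots ∨ s.queue = ∅ ∧ (s.step G).roots = s.roots + 1 := by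
  rcases s.queue.eq_empty_or_nonempty with hQ | hQ
  · rw [step_of_queue_eq_empty G hQ]
    cases s.unread with
    | nil => exact .inl rfl
    | cons v l =>
      simp only [Exploration.readRoot]
      split_ifs
      · exact .inl rfl
      · exact .inr ⟨hQ, rfl⟩
  · exact .inl (by rw [step_of_nonempty G hQ]; rfl)

end ExplorationState

open ExplorationState

/-- The state of the exploration of `G` after `k` steps when the roots are read from `vord`. -/
noncomputable def explorationAt (G : SimpleGraph (Fin n)) (vord : Fin n → Fin n) (k : ℕ) :
    ExplorationState n :=
  (step G)^[k] (init (List.ofFn vord))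

variable {vord : Fin n → Fin n}

lemma explorationAt_succ (k : ℕ) :
    explorationAt G vord (k + 1) = (explorationAt G vord k).step G :=
  Function.iterate_succ_apply' _ _ _

lemma explorationAt_roots_mono : Monotone fun k => (explorationAt G vord k).roots :=
  monotone_nat_of_le_succ fun k => by
    rw [explorationAt_succ]
    rcases roots_step G (explorationAt G vord k) with h | h <;> omega

lemma explorationAt_explored_mono : Monotone fun k => (explorationAt G vord k).explored :=
  monotone_nat_of_le_succ fun k => by
    rw [explorationAt_succ]
    exact explored_subset_step G _

lemma exists_queue_eq_empty_and_lt_roots_add_one {M : ℝ} (hM : 0 ≤ M) {k : ℕ}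
    (hk : M < (explorationAt G vord k).roots) :
    ∃ j < k, (explorationAt G vord j).queue = ∅ ∧ ((explorationAt G vord j).roots : ℝ) ≤ M ∧
      M < (explorationAt G vord j).roots + 1 := by
  induction k with
  | zero => exact absurd hk (by simpa [explorationAt, init] using hM)
  | succ k ih =>
    rcases lt_or_ge M (explorationAt G vord k).roots with h | h
    · obtain ⟨j, hj, hcross⟩ := ih h
      exact ⟨j, hj.trans k.lt_succ_self, hcross⟩
    · rw [explorationAt_succ] at hk
      rcases roots_step G (explorationAt G vord k) with h' | ⟨hQ, h'⟩
      · exact absurd hk (by rw [h']; exact h.not_gt)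
      · exact ⟨k, k.lt_succ_self, hQ, h, by rw [h'] at hk; exact_mod_cast hk⟩

/-- The union of the components of the first `pos` vertices of the order `vord`. -/
noncomputable def firstComponents (G : SimpleGraph (Fin n)) (vord : Fin n → Fin n) (pos : ℕ) :
    Finset (Fin n) :=
  reachableFrom G ((Finset.univ.filter fun i : Fin n => (i : ℕ) < pos).image vord)

lemma mem_firstComponents {pos : ℕ} {u : Fin n} :
    u ∈ firstComponents G vord pos ↔ ∃ i : Fin n, (i : ℕ) < pos ∧ G.Reachable (vord i) u := by
  simp [firstComponents, mem_reachableFrom]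

lemma firstComponents_adj_closed {pos : ℕ} {a b : Fin n} (ha : a ∈ firstComponents G vord pos)
    (hab : G.Adj a b) : b ∈ firstComponents G vord pos := by
  obtain ⟨i, hi, hia⟩ := mem_firstComponents.1 ha
  exact mem_firstComponents.2 ⟨i, hi, hia.trans hab.reachable⟩

lemma firstComponents_succ {pos : ℕ} (hpos : pos < n) :
    firstComponents G vord (pos + 1)
      = reachableFrom G (firstComponents G vord pos ∪ {vord ⟨pos, hpos⟩}) := by
  ext u
  simp only [mem_reachableFrom, Finset.mem_union, Finset.mem_singleton, mem_firstComponents]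
  constructor
  · rintro ⟨i, hi, hiu⟩
    rcases Nat.lt_succ_iff_lt_or_eq.1 hi with hi | hi
    · exact ⟨u, .inl ⟨i, hi, hiu⟩, .refl u⟩
    · exact ⟨vord i, .inr (congrArg vord (Fin.ext hi)), hiu⟩
  · rintro ⟨v, ⟨i, hi, hiv⟩ | rfl, hvu⟩
    · exact ⟨i, by omega, hiv.trans hvu⟩
    · exact ⟨⟨pos, hpos⟩, pos.lt_succ_self, hvu⟩

lemma drop_ofFn_eq_cons {pos : ℕ} (hpos : pos < n) :
    (List.ofFn vord).drop pos = vord ⟨pos, hpos⟩ :: (List.ofFn vord).drop (pos + 1) := by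
  rw [List.drop_eq_getElem_cons (by simpa using hpos), List.getElem_ofFn]

lemma exists_iterate_step_firstComponents {pos : ℕ} (hpos : pos < n)
    (hv : vord ⟨pos, hpos⟩ ∉ firstComponents G vord pos) (m : ℕ) :
    ∃ j, (step G)^[j] ⟨⟨firstComponents G vord pos, ∅, m⟩, (List.ofFn vord).drop pos⟩
      = ⟨⟨firstComponents G vord (pos + 1), ∅, m + 1⟩, (List.ofFn vord).drop (pos + 1)⟩ := by
  obtain ⟨j, hj⟩ := exists_iterate_step_eq (G := G)
    ⟨⟨firstComponents G vord pos, {vord ⟨pos, hpos⟩}, m + 1⟩, (List.ofFn vord).drop (pos + 1)⟩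
    (by simpa using hv)
    fun a ha b hab => Finset.mem_union_left _ (firstComponents_adj_closed ha hab)
  refine ⟨j + 1, ?_⟩
  rw [firstComponents_succ hpos, Function.iterate_succ_apply, step_of_queue_eq_empty G rfl,
    drop_ofFn_eq_cons hpos, Exploration.readRoot, if_neg hv]
  exact hj

lemma exists_explorationAt_eq_firstComponents {pos : ℕ} (hpos : pos ≤ n) :
    ∃ k m, explorationAt G vord k
      = ⟨⟨firstComponents G vord pos, ∅, m⟩, (List.ofFn vord).drop pos⟩ := by
  induction pos with
  | zero =>
    have hempty : firstComponents G vord 0 = ∅ := by ext; simp [mem_firstComponents]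
    exact ⟨0, 0, by rw [hempty]; rfl⟩
  | succ pos ih =>
    obtain ⟨k, m, hk⟩ := ih (by omega)
    have hlt : pos < n := by omega
    by_cases hv : vord ⟨pos, hlt⟩ ∈ firstComponents G vord pos
    · have hsucc : firstComponents G vord (pos + 1) = firstComponents G vord pos := by
        rw [firstComponents_succ hlt, Finset.union_eq_left.2 (Finset.singleton_subset_iff.2 hv),
          reachableFrom_eq_self fun a ha b hab => firstComponents_adj_closed ha hab]
      refine ⟨k + 1, m, ?_⟩
      rw [explorationAt_succ, hk, hsucc, step_of_queue_eq_empty G rfl, drop_ofFn_eq_cons hlt,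
        Exploration.readRoot, if_pos hv]
    · obtain ⟨j, hj⟩ := exists_iterate_step_firstComponents hlt hv m
      refine ⟨j + k, m + 1, ?_⟩
      rw [explorationAt, Function.iterate_add_apply, ← explorationAt, hk, hj]

lemma firstIdx_spec (hs : Function.Surjective vord) (c : G.ConnectedComponent) :
    ∃ h : firstIdx G vord c < n, G.connectedComponentMk (vord ⟨firstIdx G vord c, h⟩) = c := by
  have hne : {i : ℕ | ∃ h : i < n, G.connectedComponentMk (vord ⟨i, h⟩) = c}.Nonempty := by
    obtain ⟨v, rfl⟩ := c.exists_rep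
    obtain ⟨i, rfl⟩ := hs v
    exact ⟨i, i.2, rfl⟩
  exact Nat.sInf_mem hne

lemma firstIdx_lt_iff (hs : Function.Surjective vord) (c : G.ConnectedComponent) (pos : ℕ) :
    firstIdx G vord c < pos ↔
      ∃ i : Fin n, (i : ℕ) < pos ∧ G.connectedComponentMk (vord i) = c := by
  constructor
  · intro h
    obtain ⟨hlt, hc⟩ := firstIdx_spec hs c
    exact ⟨⟨_, hlt⟩, h, hc⟩
  · rintro ⟨i, hi, hc⟩
    exact lt_of_le_of_lt (Nat.sInf_le ⟨i.2, hc⟩) hi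

lemma mem_firstComponents_iff_firstIdx_lt (hs : Function.Surjective vord) {pos : ℕ}
    {u : Fin n} :
    u ∈ firstComponents G vord pos ↔ firstIdx G vord (G.connectedComponentMk u) < pos := by
  simp only [mem_firstComponents, firstIdx_lt_iff hs, SimpleGraph.ConnectedComponent.eq]

lemma card_firstComponents_firstIdx (hs : Function.Surjective vord) (c : G.ConnectedComponent) :
    (firstComponents G vord (firstIdx G vord c)).card = startT G vord c := by
  rw [startT, Finset.sum_boole, Nat.cast_id]
  congr 1
  ext u
  simp [mem_firstComponents_iff_firstIdx_lt hs]

lemma firstIdx_injective (hs : Function.Surjective vord) :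
    Function.Injective (firstIdx G vord) := fun c c' h => by
  obtain ⟨hlt, hc⟩ := firstIdx_spec hs c
  obtain ⟨hlt', hc'⟩ := firstIdx_spec hs c'
  rw [← hc, ← hc']
  simp only [h]

lemma card_firstComponents_succ_firstIdx (hs : Function.Surjective vord)
    (c : G.ConnectedComponent) :
    (firstComponents G vord (firstIdx G vord c + 1)).card = startT G vord c + csize G c := by
  have hset : firstComponents G vord (firstIdx G vord c + 1)
      = firstComponents G vord (firstIdx G vord c)
        ∪ Finset.univ.filter fun u => G.connectedComponentMk u = c := by
    ext u
    simp only [mem_firstComponents_iff_firstIdx_lt hs, Finset.mem_union, Finset.mem_filter,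
      Finset.mem_univ, true_and, Nat.lt_succ_iff_lt_or_eq, (firstIdx_injective hs).eq_iff]
  rw [hset, Finset.card_union_of_disjoint, card_firstComponents_firstIdx hs, csize,
    Nat.card_eq_fintype_card, Fintype.card_subtype]
  refine Finset.disjoint_left.2 fun u hu hu' => ?_
  rw [mem_firstComponents_iff_firstIdx_lt hs, (Finset.mem_filter.1 hu').2] at hu
  exact lt_irrefl _ hu

theorem exists_explorationAt_component (hs : Function.Surjective vord)
    (c : G.ConnectedComponent) :
    ∃ k k', (explorationAt G vord k).queue = ∅ ∧ (explorationAt G vord k').queue = ∅ ∧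
      (explorationAt G vord k').roots = (explorationAt G vord k).roots + 1 ∧
      (explorationAt G vord k).explored.card = startT G vord c ∧
      (explorationAt G vord k').explored.card = startT G vord c + csize G c := by
  obtain ⟨hlt, hc⟩ := firstIdx_spec hs c
  obtain ⟨k, m, hk⟩ := exists_explorationAt_eq_firstComponents (G := G) (vord := vord) hlt.le
  have hv : vord ⟨firstIdx G vord c, hlt⟩ ∉ firstComponents G vord (firstIdx G vord c) := by
    rw [mem_firstComponents_iff_firstIdx_lt hs, hc]
    exact lt_irrefl _
  obtain ⟨j, hj⟩ := exists_iterate_step_firstComponents hlt hv m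
  have hk' : explorationAt G vord (j + k) = ⟨⟨firstComponents G vord (firstIdx G vord c + 1), ∅,
      m + 1⟩, (List.ofFn vord).drop (firstIdx G vord c + 1)⟩ := by
    rw [explorationAt, Function.iterate_add_apply, ← explorationAt, hk, hj]
  refine ⟨k, j + k, by rw [hk], by rw [hk'], by rw [hk, hk'], ?_, ?_⟩
  · rw [hk, card_firstComponents_firstIdx hs]
  · rw [hk', card_firstComponents_succ_firstIdx hs]

lemma expMeasure'_not_surjective {n : ℕ} (w : Fin n → ℝ) (p : ℝ) :
    expMeasure' n w p {ω | ¬ Function.Surjective ω.2} = 0 := by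
  rw [expMeasure', Measure.sum_apply _ (Set.toFinite _).measurableSet, tsum_fintype]
  refine Finset.sum_eq_zero fun σ _ => ?_
  rw [Measure.smul_apply, Measure.map_apply (measurable_of_countable _)
    (Set.toFinite _).measurableSet]
  simp [σ.surjective]

end Components

/-! ### Exponential potentials -/

section Potential

variable {n : ℕ} {w : Fin n → ℝ} {p : ℝ}

/-- The ingredients of an exponential potential of the exploration: each discovered vertex
contributes its charge, the weight explored so far contributes through the drift, and each root
chosen has a cost. -/
structure Potential (n : ℕ) where
  charge : Fin n → ℝ
  drift : ℝ → ℝ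
  rootCost : ℝ

/-- The total weight of the explored vertices. -/
noncomputable def Exploration.exploredWeight (w : Fin n → ℝ) (e : Exploration n) : ℝ :=
  ∑ u ∈ e.explored, w u

namespace Potential

/-- The logarithm of the potential `V` in the state `e` of the exploration. -/
noncomputable def exponent (V : Potential n) (w : Fin n → ℝ) (e : Exploration n) : ℝ :=
  ∑ u ∈ e.discovered, V.charge u + V.drift (e.exploredWeight w) - V.rootCost * e.roots

/-- An upper bound for the logarithm of the expected growth of the potential `V` when `x` is
explored, the set of undiscovered vertices being `U` and the weight explored before being `t`. -/
noncomputable def gain (V : Potential n) (w : Fin n → ℝ) (p : ℝ) (U : Finset (Fin n)) (x : Fin n)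
    (t : ℝ) : ℝ :=
  ∑ u ∈ U, (Real.exp (V.charge u) - 1) * edgeProb w p x u + (V.drift (t + w x) - V.drift t)

/-- The cost of a root makes up for the expected charge of a size-biased vertex of `U`. -/
def PaysRoot (V : Potential n) (w : Fin n → ℝ) (U : Finset (Fin n)) : Prop :=
  ∑ v ∈ U, w v * Real.exp (V.charge v) ≤ Real.exp V.rootCost * ∑ v ∈ U, w v

variable (V : Potential n) {e : Exploration n}

lemma exponent_explore {x : Fin n} {N : Finset (Fin n)} (hd : Disjoint e.explored e.queue)
    (hx : x ∈ e.queue) (hN : N ⊆ e.discoveredᶜ) :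
    V.exponent w (e.explore x N) = ∑ u ∈ N, V.charge u +
      (V.exponent w e + (V.drift (e.exploredWeight w + w x) - V.drift (e.exploredWeight w))) := by
  have hdis : Disjoint e.discovered N :=
    Finset.disjoint_right.2 fun u hu => Finset.mem_compl.1 (hN hu)
  have hweight : (e.explore x N).exploredWeight w = e.exploredWeight w + w x := by
    rw [Exploration.exploredWeight, Exploration.explore,
      Finset.sum_insert (Finset.disjoint_right.1 hd hx), add_comm]
    rfl
  rw [exponent, exponent, Exploration.discovered_explore hx, Finset.sum_union hdis, hweight,
    show (e.explore x N).roots = e.roots from rfl]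
  ring

lemma exponent_addRoot {v : Fin n} (hQ : e.queue = ∅) (hv : v ∉ e.explored) :
    V.exponent w (e.addRoot v) = V.exponent w e + V.charge v - V.rootCost := by
  rw [exponent, exponent, Exploration.discovered, Exploration.discovered, hQ,
    Finset.union_empty, Exploration.addRoot, Finset.sum_union (by simpa using hv),
    Finset.sum_singleton, Exploration.exploredWeight, Exploration.exploredWeight]
  push_cast
  ring

lemma sum_childrenProb_mul_exp (φ : Fin n → ℝ) (x : Fin n) (U : Finset (Fin n)) :
    ∑ N ∈ U.powerset, childrenProb w p x U N * Real.exp (∑ u ∈ N, φ u)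
      = ∏ u ∈ U, (1 + (Real.exp (φ u) - 1) * edgeProb w p x u) := by
  have hfactor : ∀ u ∈ U, 1 + (Real.exp (φ u) - 1) * edgeProb w p x u
      = edgeProb w p x u * Real.exp (φ u) + (1 - edgeProb w p x u) := fun u _ => by ring
  rw [Finset.prod_congr rfl hfactor, Finset.prod_add]
  refine Finset.sum_congr rfl fun N _ => ?_
  rw [childrenProb, Real.exp_sum, Finset.prod_mul_distrib]
  ring

lemma sum_childrenProb_mul_exp_le (hw : ∀ i, 0 < w i) (hp : 0 ≤ p) (φ : Fin n → ℝ) (x : Fin n)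
    (U : Finset (Fin n)) :
    ∑ N ∈ U.powerset, childrenProb w p x U N * Real.exp (∑ u ∈ N, φ u)
      ≤ Real.exp (∑ u ∈ U, (Real.exp (φ u) - 1) * edgeProb w p x u) := by
  rw [sum_childrenProb_mul_exp, Real.exp_sum]
  refine Finset.prod_le_prod (fun u _ => ?_) fun u _ => ?_
  · have := mul_nonneg (Real.exp_pos (φ u)).le (edgeProb_nonneg hw hp x u)
    linarith [edgeProb_le_one w p x u]
  · rw [add_comm]
    exact Real.add_one_le_exp _

theorem isSupermartingaleOn {S : Exploration n → Prop} (hw : ∀ i, 0 < w i) (hp : 0 ≤ p) (a : ℝ)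
    (hexplore : ∀ e, S e → ∀ x, V.gain w p e.discoveredᶜ x (e.exploredWeight w) ≤ 0)
    (hroot : ∀ e, S e → e.queue = ∅ → V.PaysRoot w e.exploredᶜ) :
    IsSupermartingaleOn w p (fun e => Real.exp (V.exponent w e - a)) S where
  explore e he hd x hx := by
    set B := V.exponent w e - a
      + (V.drift (e.exploredWeight w + w x) - V.drift (e.exploredWeight w)) with hB
    have hterm : ∀ N ∈ e.discoveredᶜ.powerset, childrenProb w p x e.discoveredᶜ N *
          Real.exp (V.exponent w (e.explore x N) - a)
        = childrenProb w p x e.discoveredᶜ N * Real.exp (∑ u ∈ N, V.charge u) * Real.exp B :=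
      fun N hN => by
        rw [V.exponent_explore hd hx (Finset.mem_powerset.1 hN), mul_assoc, ← Real.exp_add, hB]
        ring_nf
    rw [Finset.sum_congr rfl hterm, ← Finset.sum_mul]
    refine (mul_le_mul_of_nonneg_right (sum_childrenProb_mul_exp_le hw hp V.charge x _)
      (Real.exp_pos B).le).trans ?_
    rw [← Real.exp_add, Real.exp_le_exp]
    have hgain := hexplore e he x
    rw [gain] at hgain
    linarith
  root e he hQ := by
    have hterm : ∀ v ∈ e.exploredᶜ, w v * Real.exp (V.exponent w (e.addRoot v) - a)
        = w v * Real.exp (V.charge v) * Real.exp (V.exponent w e - a - V.rootCost) :=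
      fun v hv => by
        rw [V.exponent_addRoot hQ (Finset.mem_compl.1 hv), mul_assoc, ← Real.exp_add]
        ring_nf
    rw [Finset.sum_congr rfl hterm, ← Finset.sum_mul]
    refine (mul_le_mul_of_nonneg_right (hroot e he hQ) (Real.exp_pos _).le).trans_eq ?_
    rw [mul_right_comm, ← Real.exp_add, add_sub_cancel, mul_comm]

theorem measure_hits_le {ι : Type*} [Fintype ι] (V : ι → Potential n) {a : ι → ℝ}
    {Bad S : Exploration n → Prop} (hw : ∀ i, 0 < w i) (hp : 0 ≤ p)
    (hV : ∀ i, IsSupermartingaleOn w p (fun e => Real.exp ((V i).exponent w e - a i)) S)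
    (h0 : ∀ i, (V i).drift 0 = 0) (hbad : ∀ e, Bad e → ∃ i, a i ≤ (V i).exponent w e) :
    expMeasure' n w p {ω | ∃ k,
        (ExplorationState.init (List.ofFn ω.2)).Hits (graphOf ω.1) Bad S k}
      ≤ ENNReal.ofReal (∑ i, Real.exp (-a i)) := by
  have hmeasure := (IsSupermartingaleOn.sum (t := Finset.univ) fun i _ => hV i).measure_hits_le
    hw hp (fun e => Finset.sum_nonneg fun i _ => (Real.exp_pos _).le) (Bad := Bad) fun e he => by
      obtain ⟨i, hi⟩ := hbad e he
      refine le_trans (Real.one_le_exp (sub_nonneg.2 hi)) (Finset.single_le_sum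
        (f := fun i => Real.exp ((V i).exponent w e - a i)) (fun j _ => (Real.exp_pos _).le)
        (Finset.mem_univ i))
  simpa [exponent, Exploration.discovered, Exploration.exploredWeight, h0] using hmeasure

end Potential

end Potential

/-! ### The statistics of the exploration -/

section Statistics

lemma exp_sub_one_le_add_sq {z : ℝ} (h0 : 0 ≤ z) (h1 : z ≤ 1) : Real.exp z - 1 ≤ z + z ^ 2 := by
  have habs := Real.abs_exp_sub_one_sub_id_le (x := z) (by rwa [abs_of_nonneg h0])
  linarith [(abs_le.1 habs).2]

lemma exp_neg_le_quadratic {z : ℝ} (h0 : 0 ≤ z) : Real.exp (-z) ≤ 1 - z + z ^ 2 / 2 := by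
  rw [Real.exp_neg, inv_le_iff_one_le_mul₀ (Real.exp_pos z)]
  calc (1 : ℝ) ≤ (1 - z + z ^ 2 / 2) * (1 + z + z ^ 2 / 2) := by nlinarith [sq_nonneg (z ^ 2)]
    _ ≤ (1 - z + z ^ 2 / 2) * Real.exp z :=
      mul_le_mul_of_nonneg_left (Real.quadratic_le_exp_of_nonneg h0)
        (by nlinarith [sq_nonneg (z - 1)])

variable {n : ℕ} {w : Fin n → ℝ} {y f C η K δ : ℝ}

lemma edgeProb_le (w : Fin n → ℝ) (p : ℝ) (x u : Fin n) : edgeProb w p x u ≤ w x * p * w u := by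
  have := Real.one_sub_le_exp_neg (w x * w u * p)
  rw [edgeProb]
  linarith

/-- The edge parameter `p_f`, written in terms of `y = ℓ^{1/3}`. -/
noncomputable def criticalProb (y f : ℝ) : ℝ := (y + f) / y ^ 4

/-- A quantitative form of Conditions (C) for a fixed number of vertices, with `y = ℓ^{1/3}`: the
parameter `η` is the relative precision of the moments and `δ` that of the largest weight and of
`f / y`, while almost all of the third moment comes from the weights which are at most `K`. -/
structure NearCritical (w : Fin n → ℝ) (y f C η K δ : ℝ) : Prop where
  w_pos : ∀ i, 0 < w i
  one_le_y : 1 ≤ y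
  C_pos : 0 < C
  η_pos : 0 < η
  η_le : η ≤ 1 / 200
  δ_pos : 0 < δ
  δ_le : δ ≤ η / 4
  sum_w : ∑ i, w i = y ^ 3
  sum_sq_le : ∑ i, w i ^ 2 ≤ y ^ 3 + η * y ^ 2
  le_sum_sq : y ^ 3 - η * y ^ 2 ≤ ∑ i, w i ^ 2
  sum_cube_le : ∑ i, w i ^ 3 ≤ C * (1 + η) * y ^ 3
  le_sum_cube : C * (1 - η) * y ^ 3 ≤ ∑ i with w i ≤ K, w i ^ 3
  w_le : ∀ i, w i ≤ δ * y
  one_le_f : 1 ≤ f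
  f_le : f ≤ δ * y
  le_ηf : η + 2 * C ≤ η * f
  le_ηy : 4 ≤ η * y
  C_le_ηy : 16 * C ≤ η * y
  δ_mul_le : δ * (3 + 3 * C) ≤ 2 * η * C
  δ_mul_K_le : 3 * K * δ ≤ η * C
  δ_mul_C_le : 6 * δ * C ≤ 1

lemma Potential.paysRoot_of_sum_le {V : Potential n} {U : Finset (Fin n)} (hw : ∀ i, 0 < w i)
    (h : ∑ v ∈ U, w v * (Real.exp (V.charge v) - 1) ≤ V.rootCost * ∑ v ∈ U, w v) :
    V.PaysRoot w U := by
  have hexp := mul_le_mul_of_nonneg_right (Real.add_one_le_exp V.rootCost)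
    (Finset.sum_nonneg fun v (_ : v ∈ U) => (hw v).le)
  simp only [mul_sub_one, Finset.sum_sub_distrib] at h
  rw [PaysRoot]
  linarith

lemma Potential.paysRoot_of_charge_nonpos {V : Potential n} (U : Finset (Fin n))
    (hw : ∀ i, 0 < w i) (hcharge : ∀ v, V.charge v ≤ 0) (hcost : V.rootCost = 0) :
    V.PaysRoot w U := by
  refine paysRoot_of_sum_le hw ?_
  rw [hcost, zero_mul]
  exact Finset.sum_nonpos fun v _ => mul_nonpos_of_nonneg_of_nonpos (hw v).le
    (sub_nonpos.2 (Real.exp_le_one_iff.2 (hcharge v)))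

namespace NearCritical

lemma y_pos (H : NearCritical w y f C η K δ) : 0 < y := zero_lt_one.trans_le H.one_le_y

lemma f_pos (H : NearCritical w y f C η K δ) : 0 < f := zero_lt_one.trans_le H.one_le_f

lemma K_pos (H : NearCritical w y f C η K δ) : 0 < K := by
  by_contra! hK
  have hempty : (Finset.univ.filter fun i => w i ≤ K) = ∅ :=
    Finset.filter_false_of_mem fun i _ => (hK.trans_lt (H.w_pos i)).not_ge
  have hle := H.le_sum_cube
  rw [hempty, Finset.sum_empty] at hle
  have hη : 0 < 1 - η := by linarith [H.η_le]
  exact hle.not_gt (mul_pos (mul_pos H.C_pos hη) (pow_pos H.y_pos 3))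

lemma f_div_y_pos (H : NearCritical w y f C η K δ) : 0 < f / y := div_pos H.f_pos H.y_pos

lemma f_div_y_le (H : NearCritical w y f C η K δ) : f / y ≤ δ := (div_le_iff₀ H.y_pos).2 H.f_le

lemma w_div_y_nonneg (H : NearCritical w y f C η K δ) (u : Fin n) : 0 ≤ w u / y :=
  div_nonneg (H.w_pos u).le H.y_pos.le

lemma w_div_y_le (H : NearCritical w y f C η K δ) (u : Fin n) : w u / y ≤ δ :=
  (div_le_iff₀ H.y_pos).2 (H.w_le u)

lemma sq_div_sq_le (H : NearCritical w y f C η K δ) (u : Fin n) : w u ^ 2 / y ^ 2 ≤ δ := by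
  rw [← div_pow]
  nlinarith [H.w_div_y_nonneg u, H.w_div_y_le u, H.δ_le, H.η_le]

lemma inv_y_le (H : NearCritical w y f C η K δ) : 1 / y ≤ η / 4 := by
  rw [div_le_iff₀ H.y_pos]
  linarith [H.le_ηy]

lemma criticalProb_nonneg (H : NearCritical w y f C η K δ) : 0 ≤ criticalProb y f :=
  div_nonneg (add_pos H.y_pos H.f_pos).le (pow_pos H.y_pos 4).le

lemma criticalProb_mul (H : NearCritical w y f C η K δ) :
    criticalProb y f * y ^ 3 = 1 + f / y := by
  have := H.y_pos
  rw [criticalProb]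
  field_simp

lemma sum_compl_cube_le (H : NearCritical w y f C η K δ) (P : Finset (Fin n)) :
    ∑ u ∈ Pᶜ, w u ^ 3 ≤ C * (1 + η) * y ^ 3 :=
  (Finset.sum_le_univ_sum_of_nonneg fun i => (pow_pos (H.w_pos i) 3).le).trans H.sum_cube_le

lemma w_mul_criticalProb_le (H : NearCritical w y f C η K δ) (x : Fin n) :
    w x * criticalProb y f ≤ 1 / y := by
  have hδ : δ * (1 + f / y) ≤ 1 := by
    nlinarith [H.f_div_y_le, H.f_div_y_pos, H.δ_pos, H.δ_le, H.η_le]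
  rw [le_div_iff₀ H.y_pos]
  calc w x * criticalProb y f * y ≤ δ * y * criticalProb y f * y :=
        mul_le_mul_of_nonneg_right (mul_le_mul_of_nonneg_right (H.w_le x) H.criticalProb_nonneg)
          H.y_pos.le
    _ = δ * (criticalProb y f * y ^ 2) := by ring
    _ ≤ δ * (criticalProb y f * y ^ 3) := by
        have := H.criticalProb_nonneg
        have := H.δ_pos
        gcongr
        exacts [H.one_le_y, by norm_num]
    _ ≤ 1 := by rwa [H.criticalProb_mul]

lemma le_edgeProb (H : NearCritical w y f C η K δ) (x u : Fin n) :
    w x * criticalProb y f * (w u * (1 - w u / (2 * y))) ≤ edgeProb w (criticalProb y f) x u := by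
  have hy := H.y_pos
  have hu := H.w_pos u
  have hwp : 0 ≤ w x * criticalProb y f := mul_nonneg (H.w_pos x).le H.criticalProb_nonneg
  have hexp := exp_neg_le_quadratic (mul_nonneg hwp hu.le)
  have hsq : (w x * criticalProb y f * w u) ^ 2 / 2
      ≤ w x * criticalProb y f * (w u * (w u / (2 * y))) := by
    calc (w x * criticalProb y f * w u) ^ 2 / 2
        = w x * criticalProb y f * (w u ^ 2 / 2) * (w x * criticalProb y f) := by ring
      _ ≤ w x * criticalProb y f * (w u ^ 2 / 2) * (1 / y) :=
          mul_le_mul_of_nonneg_left (H.w_mul_criticalProb_le x) (by positivity)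
      _ = w x * criticalProb y f * (w u * (w u / (2 * y))) := by field_simp
  rw [edgeProb, mul_right_comm (w x) (w u)]
  linarith

lemma gain_nonpos_of_charge_nonneg (H : NearCritical w y f C η K δ) (V : Potential n)
    {U : Finset (Fin n)} {x : Fin n} {t ρ : ℝ} (h0 : ∀ u, 0 ≤ V.charge u)
    (h1 : ∀ u, V.charge u ≤ 1) (hρ : ∑ u ∈ U, w u * (V.charge u + V.charge u ^ 2) ≤ ρ * y ^ 3)
    (hdrift : w x * ((1 + f / y) * ρ) + (V.drift (t + w x) - V.drift t) ≤ 0) :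
    V.gain w (criticalProb y f) U x t ≤ 0 := by
  have hwp : 0 ≤ w x * criticalProb y f := mul_nonneg (H.w_pos x).le H.criticalProb_nonneg
  have hsum : ∑ u ∈ U, (Real.exp (V.charge u) - 1) * edgeProb w (criticalProb y f) x u
      ≤ w x * ((1 + f / y) * ρ) :=
    calc ∑ u ∈ U, (Real.exp (V.charge u) - 1) * edgeProb w (criticalProb y f) x u
        ≤ ∑ u ∈ U, (V.charge u + V.charge u ^ 2) * (w x * criticalProb y f * w u) :=
          Finset.sum_le_sum fun u _ => mul_le_mul (exp_sub_one_le_add_sq (h0 u) (h1 u))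
            (edgeProb_le w _ x u) (edgeProb_nonneg H.w_pos H.criticalProb_nonneg x u)
            (add_nonneg (h0 u) (sq_nonneg _))
      _ = w x * criticalProb y f * ∑ u ∈ U, w u * (V.charge u + V.charge u ^ 2) := by
          rw [Finset.mul_sum]
          exact Finset.sum_congr rfl fun u _ => by ring
      _ ≤ w x * criticalProb y f * (ρ * y ^ 3) := mul_le_mul_of_nonneg_left hρ hwp
      _ = w x * ((1 + f / y) * ρ) := by rw [← H.criticalProb_mul]; ring
  rw [Potential.gain]
  linarith

lemma gain_nonpos_of_charge_nonpos (H : NearCritical w y f C η K δ) (V : Potential n)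
    {U : Finset (Fin n)} {x : Fin n} {t ρ : ℝ} {z : Fin n → ℝ} (hz : ∀ u, V.charge u = -z u)
    (h0 : ∀ u, 0 ≤ z u) (h1 : ∀ u, z u ≤ 1)
    (hρ : ρ * y ^ 3 ≤ ∑ u ∈ U, w u * ((z u - z u ^ 2 / 2) * (1 - w u / (2 * y))))
    (hdrift : V.drift (t + w x) - V.drift t ≤ w x * ((1 + f / y) * ρ)) :
    V.gain w (criticalProb y f) U x t ≤ 0 := by
  have hwp : 0 ≤ w x * criticalProb y f := mul_nonneg (H.w_pos x).le H.criticalProb_nonneg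
  have hsum : w x * ((1 + f / y) * ρ)
      ≤ ∑ u ∈ U, (1 - Real.exp (-z u)) * edgeProb w (criticalProb y f) x u := by
    calc w x * ((1 + f / y) * ρ) = w x * criticalProb y f * (ρ * y ^ 3) := by
          rw [← H.criticalProb_mul]; ring
      _ ≤ w x * criticalProb y f *
          ∑ u ∈ U, w u * ((z u - z u ^ 2 / 2) * (1 - w u / (2 * y))) :=
          mul_le_mul_of_nonneg_left hρ hwp
      _ = ∑ u ∈ U, (z u - z u ^ 2 / 2) *
          (w x * criticalProb y f * (w u * (1 - w u / (2 * y)))) := by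
          rw [Finset.mul_sum]
          exact Finset.sum_congr rfl fun u _ => by ring
      _ ≤ ∑ u ∈ U, (1 - Real.exp (-z u)) * edgeProb w (criticalProb y f) x u := by
          refine Finset.sum_le_sum fun u _ => ?_
          have hz0 : 0 ≤ z u - z u ^ 2 / 2 := by nlinarith [h0 u, h1 u]
          have hexp : z u - z u ^ 2 / 2 ≤ 1 - Real.exp (-z u) := by
            linarith [exp_neg_le_quadratic (h0 u)]
          exact (mul_le_mul_of_nonneg_left (H.le_edgeProb x u) hz0).trans
            (mul_le_mul_of_nonneg_right hexp
              (edgeProb_nonneg H.w_pos H.criticalProb_nonneg x u))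
  have hneg : ∑ u ∈ U, (Real.exp (V.charge u) - 1) * edgeProb w (criticalProb y f) x u
      = -∑ u ∈ U, (1 - Real.exp (-z u)) * edgeProb w (criticalProb y f) x u := by
    rw [← Finset.sum_neg_distrib]
    exact Finset.sum_congr rfl fun u _ => by rw [hz]; ring
  rw [Potential.gain, hneg]
  linarith

end NearCritical

end Statistics

section Statistics

variable {n : ℕ} {w : Fin n → ℝ} {y f C η K δ x : ℝ}

/-- The potential bounding the sum of the squared weights of the discovered vertices from above. -/
noncomputable def squareUpper (w : Fin n → ℝ) (y C η : ℝ) : Potential n where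
  charge u := w u ^ 2 / y ^ 2
  drift t := -(C * (1 + 4 * η) / y ^ 2 * t)
  rootCost := 8 * C / y ^ 2

/-- The potential bounding the sum of the squared weights of the discovered vertices from below;
only the weights which are at most `K` are taken into account. -/
noncomputable def squareLower (w : Fin n → ℝ) (y C η K : ℝ) : Potential n where
  charge u := -if w u ≤ K then w u ^ 2 / y ^ 2 else 0
  drift t := C * (1 - 4 * η) / y ^ 2 * t
  rootCost := 0

/-- The potential bounding the number of the discovered vertices from above. -/
noncomputable def countUpper (n : ℕ) (y η : ℝ) : Potential n where
  charge _ := 1 / y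
  drift t := -((1 + η) / y * t)
  rootCost := 1 / y

/-- The potential bounding the number of the discovered vertices from below. -/
noncomputable def countLower (n : ℕ) (y η : ℝ) : Potential n where
  charge _ := -(1 / y)
  drift t := (1 - 4 * η) / y * t
  rootCost := 0

/-- The potential bounding the total weight of the queue from below. -/
noncomputable def massLower (w : Fin n → ℝ) (y f C η : ℝ) : Potential n where
  charge u := -(w u / y)
  drift t := (t + ((1 - 8 * η) * f / y * t - C * (1 + 6 * η) / (2 * y ^ 3) * t ^ 2)) / y
  rootCost := -(1 / (4 * y))

/-- The potential bounding the total weight of the queue from above. -/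
noncomputable def massUpper (w : Fin n → ℝ) (y f C η : ℝ) : Potential n where
  charge u := w u / y
  drift t := -((t + ((1 + 8 * η) * f / y * t - C * (1 - 4 * η) / (2 * y ^ 3) * t ^ 2)) / y)
  rootCost := 4 / y

namespace NearCritical

lemma gain_squareUpper (H : NearCritical w y f C η K δ) (P : Finset (Fin n)) (x : Fin n) (t : ℝ) :
    (squareUpper w y C η).gain w (criticalProb y f) Pᶜ x t ≤ 0 := by
  have hy := H.y_pos
  have hδ := H.δ_pos
  have hC := H.C_pos
  have hx := H.w_pos x
  have hη := H.η_le
  have hle : ∀ u, w u ^ 2 / y ^ 2 ≤ δ := H.sq_div_sq_le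
  have hpos : ∀ u, 0 ≤ w u ^ 2 / y ^ 2 := fun u => by positivity
  refine H.gain_nonpos_of_charge_nonneg _ (ρ := (1 + δ) * (1 + η) * (C / y ^ 2)) hpos
    (fun u => (hle u).trans (by linarith [H.δ_le])) ?_ ?_
  · calc ∑ u ∈ Pᶜ, w u * (w u ^ 2 / y ^ 2 + (w u ^ 2 / y ^ 2) ^ 2)
        ≤ ∑ u ∈ Pᶜ, (1 + δ) / y ^ 2 * w u ^ 3 := by
          refine Finset.sum_le_sum fun u _ => ?_
          calc w u * (w u ^ 2 / y ^ 2 + (w u ^ 2 / y ^ 2) ^ 2)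
              = w u * (w u ^ 2 / y ^ 2) * (1 + w u ^ 2 / y ^ 2) := by ring
            _ ≤ w u * (w u ^ 2 / y ^ 2) * (1 + δ) := mul_le_mul_of_nonneg_left
                (by linarith [hle u]) (mul_nonneg (H.w_pos u).le (hpos u))
            _ = (1 + δ) / y ^ 2 * w u ^ 3 := by ring
      _ ≤ (1 + δ) / y ^ 2 * (C * (1 + η) * y ^ 3) := by
          rw [← Finset.mul_sum]
          exact mul_le_mul_of_nonneg_left (H.sum_compl_cube_le P) (by positivity)
      _ = (1 + δ) * (1 + η) * (C / y ^ 2) * y ^ 3 := by ring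
  · have hcoeff : (1 + f / y) * ((1 + δ) * (1 + η)) ≤ 1 + 4 * η := by
      have h1 : (1 + f / y) * (1 + δ) ≤ 1 + η := by nlinarith [H.f_div_y_le, H.δ_le]
      nlinarith [H.η_pos]
    have := mul_le_mul_of_nonneg_left hcoeff (by positivity : 0 ≤ w x * (C / y ^ 2))
    simp only [squareUpper]
    linear_combination this

lemma le_sum_compl_cube (H : NearCritical w y f C η K δ) {P : Finset (Fin n)}
    (hP : K * ∑ u ∈ P, w u ^ 2 ≤ η * C * y ^ 3) :
    C * (1 - 2 * η) * y ^ 3 ≤ ∑ u ∈ Pᶜ, if w u ≤ K then w u ^ 3 else 0 := by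
  have hsum := H.le_sum_cube
  rw [Finset.sum_filter, ← Finset.sum_add_sum_compl P] at hsum
  have hP' : ∑ u ∈ P, (if w u ≤ K then w u ^ 3 else 0) ≤ K * ∑ u ∈ P, w u ^ 2 := by
    rw [Finset.mul_sum]
    refine Finset.sum_le_sum fun u _ => ?_
    split_ifs with hK
    · rw [pow_succ']
      exact mul_le_mul_of_nonneg_right hK (sq_nonneg _)
    · exact mul_nonneg H.K_pos.le (sq_nonneg _)
  linarith

lemma gain_squareLower (H : NearCritical w y f C η K δ) {P : Finset (Fin n)}
    (hP : K * ∑ u ∈ P, w u ^ 2 ≤ η * C * y ^ 3) (x : Fin n) (t : ℝ) :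
    (squareLower w y C η K).gain w (criticalProb y f) Pᶜ x t ≤ 0 := by
  have hy := H.y_pos
  have hη := H.η_le
  have hδ := H.δ_pos
  have hδη := H.δ_le
  set z : Fin n → ℝ := fun u => if w u ≤ K then w u ^ 2 / y ^ 2 else 0 with hz
  have hz0 : ∀ u, 0 ≤ z u := fun u => by rw [hz]; positivity
  have hzδ : ∀ u, z u ≤ δ := fun u => by
    rw [hz]
    dsimp only
    split_ifs
    exacts [H.sq_div_sq_le u, hδ.le]
  refine H.gain_nonpos_of_charge_nonpos _ (z := z) (ρ := (1 - δ) ^ 2 * (1 - 2 * η) * (C / y ^ 2))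
    (fun _ => rfl) hz0 (fun u => (hzδ u).trans (by linarith)) ?_ ?_
  · calc (1 - δ) ^ 2 * (1 - 2 * η) * (C / y ^ 2) * y ^ 3
        = (1 - δ) ^ 2 / y ^ 2 * (C * (1 - 2 * η) * y ^ 3) := by ring
      _ ≤ (1 - δ) ^ 2 / y ^ 2 * ∑ u ∈ Pᶜ, if w u ≤ K then w u ^ 3 else 0 :=
          mul_le_mul_of_nonneg_left (H.le_sum_compl_cube hP) (by positivity)
      _ = ∑ u ∈ Pᶜ, w u * z u * ((1 - δ) * (1 - δ)) := by
          rw [Finset.mul_sum]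
          refine Finset.sum_congr rfl fun u _ => ?_
          rw [hz]
          dsimp only
          split_ifs <;> ring
      _ ≤ ∑ u ∈ Pᶜ, w u * ((z u - z u ^ 2 / 2) * (1 - w u / (2 * y))) := by
          refine Finset.sum_le_sum fun u _ => ?_
          have hhalf : w u / (2 * y) = w u / y / 2 := by ring
          have hmul : (1 - δ) * (1 - δ) ≤ (1 - z u / 2) * (1 - w u / (2 * y)) :=
            mul_le_mul (by linarith [hzδ u]) (by linarith [H.w_div_y_le u]) (by linarith)
              (by linarith [hzδ u])
          linear_combination mul_le_mul_of_nonneg_left hmul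
            (mul_nonneg (H.w_pos u).le (hz0 u))
  · have hcoeff : 1 - 4 * η ≤ (1 + f / y) * ((1 - δ) ^ 2 * (1 - 2 * η)) := by
      have hsq : 1 - 2 * δ ≤ (1 - δ) ^ 2 := by nlinarith
      have hmul : 1 - 4 * η ≤ (1 - δ) ^ 2 * (1 - 2 * η) := by nlinarith
      nlinarith [H.f_div_y_pos]
    have := mul_le_mul_of_nonneg_left hcoeff
      (mul_nonneg (H.w_pos x).le (div_nonneg H.C_pos.le (sq_nonneg y)))
    simp only [squareLower]
    linear_combination this

lemma gain_countUpper (H : NearCritical w y f C η K δ) (P : Finset (Fin n)) (x : Fin n) (t : ℝ) :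
    (countUpper n y η).gain w (criticalProb y f) Pᶜ x t ≤ 0 := by
  have hy := H.y_pos
  have hx := H.w_pos x
  have hη := H.η_le
  have hy0 : 0 ≤ 1 / y := by positivity
  refine H.gain_nonpos_of_charge_nonneg _ (ρ := (1 + η / 4) * (1 / y)) (fun _ => hy0)
    (fun _ => H.inv_y_le.trans (by linarith)) ?_ ?_
  · calc ∑ u ∈ Pᶜ, w u * (1 / y + (1 / y) ^ 2)
        = (1 + 1 / y) * (1 / y) * ∑ u ∈ Pᶜ, w u := by
          rw [← Finset.sum_mul]
          ring
      _ ≤ (1 + η / 4) * (1 / y) * y ^ 3 := by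
          have hsum := Finset.sum_le_univ_sum_of_nonneg (s := Pᶜ) fun i => (H.w_pos i).le
          rw [H.sum_w] at hsum
          have := H.inv_y_le
          have := H.η_pos
          gcongr
          exact Finset.sum_nonneg fun u _ => (H.w_pos u).le
  · have hcoeff : (1 + f / y) * (1 + η / 4) ≤ 1 + η := by
      nlinarith [H.f_div_y_le, H.f_div_y_pos, H.δ_le]
    have := mul_le_mul_of_nonneg_left hcoeff (mul_nonneg hx.le hy0)
    simp only [countUpper]
    linear_combination this

lemma gain_countLower (H : NearCritical w y f C η K δ) {P : Finset (Fin n)}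
    (hP : ∑ u ∈ P, w u ≤ η * y ^ 3) (x : Fin n) (t : ℝ) :
    (countLower n y η).gain w (criticalProb y f) Pᶜ x t ≤ 0 := by
  have hy := H.y_pos
  have hη := H.η_le
  have hδη := H.δ_le
  have hη0 := H.η_pos
  have hy0 : 0 ≤ 1 / y := by positivity
  refine H.gain_nonpos_of_charge_nonpos _ (z := fun _ => 1 / y) (ρ := (1 - η) ^ 3 * (1 / y))
    (fun _ => rfl) (fun _ => hy0) (fun _ => H.inv_y_le.trans (by linarith)) ?_ ?_
  · have hsum : y ^ 3 * (1 - η) ≤ ∑ u ∈ Pᶜ, w u := by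
      linarith [H.sum_w, Finset.sum_add_sum_compl P w]
    calc (1 - η) ^ 3 * (1 / y) * y ^ 3
        = (1 - η) * (1 - η) * (1 / y) * (y ^ 3 * (1 - η)) := by ring
      _ ≤ (1 - η) * (1 - η) * (1 / y) * ∑ u ∈ Pᶜ, w u := mul_le_mul_of_nonneg_left hsum
          (mul_nonneg (mul_self_nonneg _) hy0)
      _ ≤ ∑ u ∈ Pᶜ, w u * ((1 / y - (1 / y) ^ 2 / 2) * (1 - w u / (2 * y))) := by
          rw [Finset.mul_sum]
          refine Finset.sum_le_sum fun u _ => ?_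
          have hhalf : w u / (2 * y) = w u / y / 2 := by ring
          have hmul : (1 - η) * (1 - η) ≤ (1 - 1 / y / 2) * (1 - w u / (2 * y)) :=
            mul_le_mul (by linarith [H.inv_y_le]) (by linarith [H.w_div_y_le u]) (by linarith)
              (by linarith [H.inv_y_le])
          linear_combination mul_le_mul_of_nonneg_left hmul (mul_nonneg (H.w_pos u).le hy0)
  · have hcoeff : 1 - 4 * η ≤ (1 + f / y) * (1 - η) ^ 3 := by
      have hsq : 1 - 2 * η ≤ (1 - η) ^ 2 := by nlinarith
      have hcube : 1 - 4 * η ≤ (1 - η) ^ 3 := by nlinarith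
      nlinarith [H.f_div_y_pos]
    have := mul_le_mul_of_nonneg_left hcoeff (mul_nonneg (H.w_pos x).le hy0)
    simp only [countLower]
    linear_combination this

lemma sum_compl_cube_div_le (H : NearCritical w y f C η K δ) (P : Finset (Fin n)) :
    (∑ u ∈ Pᶜ, w u ^ 3) / y + η * y ^ 2 ≤ η * f * y ^ 2 := by
  have hy := H.y_pos
  have hcube : (∑ u ∈ Pᶜ, w u ^ 3) / y ≤ C * (1 + η) * y ^ 2 := by
    rw [div_le_iff₀ hy]
    linarith [H.sum_compl_cube_le P]
  have hf : (η + C * (1 + η)) * y ^ 2 ≤ η * f * y ^ 2 := by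
    have := H.le_ηf
    gcongr
    nlinarith [H.C_pos, H.η_le]
  linarith

lemma le_sum_compl_mass (H : NearCritical w y f C η K δ) {P : Finset (Fin n)} {t : ℝ}
    (hP : ∑ u ∈ P, w u ^ 2 ≤ C * (1 + 4 * η) * t + 2 * η * f * y ^ 2) :
    (y ^ 3 - C * (1 + 4 * η) * t - 3 * (η * f) * y ^ 2) / y
      ≤ ∑ u ∈ Pᶜ, w u * ((w u / y - (w u / y) ^ 2 / 2) * (1 - w u / (2 * y))) := by
  calc (y ^ 3 - C * (1 + 4 * η) * t - 3 * (η * f) * y ^ 2) / y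
      ≤ (∑ u ∈ Pᶜ, w u ^ 2 - (∑ u ∈ Pᶜ, w u ^ 3) / y) / y := by
        refine div_le_div_of_nonneg_right ?_ H.y_pos.le
        linarith [H.le_sum_sq, H.sum_compl_cube_div_le P,
          Finset.sum_add_sum_compl P fun u => w u ^ 2]
    _ = ∑ u ∈ Pᶜ, w u * (w u / y * (1 - w u / y)) := by
        rw [Finset.sum_div, ← Finset.sum_sub_distrib, Finset.sum_div]
        exact Finset.sum_congr rfl fun u _ => by ring
    _ ≤ ∑ u ∈ Pᶜ, w u * ((w u / y - (w u / y) ^ 2 / 2) * (1 - w u / (2 * y))) := by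
        refine Finset.sum_le_sum fun u _ => mul_le_mul_of_nonneg_left ?_ (H.w_pos u).le
        have hhalf : w u / (2 * y) = w u / y / 2 := by ring
        rw [hhalf]
        nlinarith [pow_nonneg (H.w_div_y_nonneg u) 3]

lemma sum_compl_mass_le (H : NearCritical w y f C η K δ) {P : Finset (Fin n)} {t : ℝ}
    (hP : C * (1 - 4 * η) * t - η * f * y ^ 2 ≤ ∑ u ∈ P, w u ^ 2) :
    ∑ u ∈ Pᶜ, w u * (w u / y + (w u / y) ^ 2)
      ≤ (y ^ 3 - C * (1 - 4 * η) * t + 2 * (η * f) * y ^ 2) / y := by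
  calc ∑ u ∈ Pᶜ, w u * (w u / y + (w u / y) ^ 2)
      = (∑ u ∈ Pᶜ, w u ^ 2 + (∑ u ∈ Pᶜ, w u ^ 3) / y) / y := by
        rw [Finset.sum_div, ← Finset.sum_add_distrib, Finset.sum_div]
        exact Finset.sum_congr rfl fun u _ => by ring
    _ ≤ (y ^ 3 - C * (1 - 4 * η) * t + 2 * (η * f) * y ^ 2) / y := by
        refine div_le_div_of_nonneg_right ?_ H.y_pos.le
        linarith [H.sum_sq_le, H.sum_compl_cube_div_le P,
          Finset.sum_add_sum_compl P fun u => w u ^ 2]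

lemma massLower_drift_coeff_le {a η τ : ℝ} (ha : 0 ≤ a) (haη : a ≤ η) (hη : η ≤ 1 / 200)
    (hτ : 0 ≤ τ) :
    1 + (1 - 8 * η) * a - (1 + 6 * η) * τ ≤ (1 + a) * (1 - (1 + 4 * η) * τ - 3 * η * a) := by
  have h1 : (1 + a) * (1 + 4 * η) ≤ 1 + 6 * η := by nlinarith
  have h2 : (1 + a) * (η * a) ≤ 2 * (η * a) := by nlinarith [mul_nonneg (ha.trans haη) ha]
  nlinarith [mul_le_mul_of_nonneg_right h1 hτ, mul_nonneg (ha.trans haη) ha]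

lemma massUpper_drift_coeff_le {a η τ : ℝ} (ha : 0 ≤ a) (haη : a ≤ η) (hη : η ≤ 1 / 200)
    (hτ : 0 ≤ τ) :
    (1 + a) * (1 - (1 - 4 * η) * τ + 2 * η * a) ≤ 1 + (1 + 7 * η) * a - (1 - 4 * η) * τ := by
  have h1 : 0 ≤ a * ((1 - 4 * η) * τ) := mul_nonneg ha (mul_nonneg (by linarith) hτ)
  have h2 : (1 + a) * (η * a) ≤ 2 * (η * a) := by nlinarith [mul_nonneg (ha.trans haη) ha]
  nlinarith [mul_nonneg (ha.trans haη) ha]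

lemma gain_massLower (H : NearCritical w y f C η K δ) {P : Finset (Fin n)} {t : ℝ} (ht : 0 ≤ t)
    (hP : ∑ u ∈ P, w u ^ 2 ≤ C * (1 + 4 * η) * t + 2 * η * f * y ^ 2) (x : Fin n) :
    (massLower w y f C η).gain w (criticalProb y f) Pᶜ x t ≤ 0 := by
  have hy := H.y_pos
  have hC := H.C_pos
  have hη := H.η_pos
  have hηle := H.η_le
  have hδη := H.δ_le
  have hz0 := H.w_div_y_nonneg
  have hzδ := H.w_div_y_le
  refine H.gain_nonpos_of_charge_nonpos _ (z := fun u => w u / y)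
    (ρ := (1 - (1 + 4 * η) * (C * t / y ^ 3) - 3 * η * (f / y)) / y)
    (fun _ => rfl) hz0 (fun u => (hzδ u).trans (by linarith)) ?_ ?_
  · refine le_trans (le_of_eq ?_) (H.le_sum_compl_mass hP)
    field_simp
  · have hcoeff := massLower_drift_coeff_le (τ := C * t / y ^ 3) H.f_div_y_pos.le
      (by linarith [H.f_div_y_le]) hηle (by positivity)
    have hsq : 0 ≤ C * (1 + 6 * η) / (2 * y ^ 3) * w x ^ 2 / y := by positivity
    have := mul_le_mul_of_nonneg_left hcoeff (hz0 x)
    simp only [massLower]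
    linear_combination this + hsq

lemma gain_massUpper (H : NearCritical w y f C η K δ) {P : Finset (Fin n)} {t : ℝ} (ht : 0 ≤ t)
    (hP : C * (1 - 4 * η) * t - η * f * y ^ 2 ≤ ∑ u ∈ P, w u ^ 2) (x : Fin n) :
    (massUpper w y f C η).gain w (criticalProb y f) Pᶜ x t ≤ 0 := by
  have hy := H.y_pos
  have hC := H.C_pos
  have hη := H.η_pos
  have hηle := H.η_le
  have hδη := H.δ_le
  have hz0 := H.w_div_y_nonneg
  have hzδ := H.w_div_y_le
  refine H.gain_nonpos_of_charge_nonneg _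
    (ρ := (1 - (1 - 4 * η) * (C * t / y ^ 3) + 2 * η * (f / y)) / y)
    hz0 (fun u => (hzδ u).trans (by linarith)) ?_ ?_
  · refine (H.sum_compl_mass_le hP).trans (le_of_eq ?_)
    field_simp
  · have hcoeff := massUpper_drift_coeff_le (τ := C * t / y ^ 3) H.f_div_y_pos.le
      (by linarith [H.f_div_y_le]) hηle (by positivity)
    have hstep : C * (1 - 4 * η) / (2 * y ^ 3) * w x ≤ η * (f / y) := by
      have hle : (1 - 4 * η) / 2 * (w x / y) * (1 / y) ≤ 1 :=
        mul_le_one₀ (mul_le_one₀ (by linarith) (hz0 x) (by linarith [hzδ x])) (by positivity)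
          (by linarith [H.inv_y_le])
      calc C * (1 - 4 * η) / (2 * y ^ 3) * w x
          = C / y * ((1 - 4 * η) / 2 * (w x / y) * (1 / y)) := by field_simp
        _ ≤ C / y := mul_le_of_le_one_right (by positivity) hle
        _ ≤ η * f / y := div_le_div_of_nonneg_right (by linarith [H.le_ηf]) hy.le
        _ = η * (f / y) := by ring
    have := mul_le_mul_of_nonneg_left (hcoeff.trans (by linarith :
      _ ≤ 1 + (1 + 8 * η) * (f / y) - (1 - 4 * η) * (C * t / y ^ 3)
        - C * (1 - 4 * η) / (2 * y ^ 3) * w x)) (hz0 x)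
    simp only [massUpper]
    linear_combination this

lemma paysRoot_squareUpper (H : NearCritical w y f C η K δ) {D : Finset (Fin n)}
    (hD : ∑ u ∈ D, w u ≤ y ^ 3 / 2) : (squareUpper w y C η).PaysRoot w Dᶜ := by
  have hy := H.y_pos
  have hC := H.C_pos
  refine Potential.paysRoot_of_sum_le H.w_pos ?_
  have hsum : y ^ 3 / 2 ≤ ∑ v ∈ Dᶜ, w v := by
    linarith [H.sum_w, Finset.sum_add_sum_compl D w]
  calc ∑ v ∈ Dᶜ, w v * (Real.exp (w v ^ 2 / y ^ 2) - 1)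
      ≤ ∑ v ∈ Dᶜ, w v * (2 * (w v ^ 2 / y ^ 2)) := by
        refine Finset.sum_le_sum fun v _ => mul_le_mul_of_nonneg_left ?_ (H.w_pos v).le
        have h0 : 0 ≤ w v ^ 2 / y ^ 2 := by positivity
        have h1 : w v ^ 2 / y ^ 2 ≤ 1 := by linarith [H.sq_div_sq_le v, H.δ_le, H.η_le]
        nlinarith [exp_sub_one_le_add_sq h0 h1]
    _ = 2 / y ^ 2 * ∑ v ∈ Dᶜ, w v ^ 3 := by
        rw [Finset.mul_sum]
        exact Finset.sum_congr rfl fun v _ => by ring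
    _ ≤ 2 / y ^ 2 * (C * (1 + η) * y ^ 3) :=
        mul_le_mul_of_nonneg_left (H.sum_compl_cube_le D) (by positivity)
    _ = 4 * (1 + η) * C / y ^ 2 * (y ^ 3 / 2) := by ring
    _ ≤ 8 * C / y ^ 2 * ∑ v ∈ Dᶜ, w v := by
        gcongr
        linarith [H.η_le]

lemma paysRoot_squareLower (H : NearCritical w y f C η K δ) (U : Finset (Fin n)) :
    (squareLower w y C η K).PaysRoot w U :=
  Potential.paysRoot_of_charge_nonpos U H.w_pos
    (fun v => neg_nonpos.2 (by positivity)) rfl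

lemma paysRoot_countUpper (y η : ℝ) (U : Finset (Fin n)) : (countUpper n y η).PaysRoot w U := by
  simp only [Potential.PaysRoot, countUpper, ← Finset.sum_mul]
  rw [mul_comm]

lemma paysRoot_countLower (H : NearCritical w y f C η K δ) (U : Finset (Fin n)) :
    (countLower n y η).PaysRoot w U :=
  Potential.paysRoot_of_charge_nonpos U H.w_pos
    (fun _ => neg_nonpos.2 (one_div_nonneg.2 H.y_pos.le)) rfl

lemma paysRoot_massLower (H : NearCritical w y f C η K δ) {D : Finset (Fin n)}
    (hD : ∑ u ∈ D, w u ^ 2 ≤ y ^ 3 / 4) : (massLower w y f C η).PaysRoot w Dᶜ := by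
  have hy := H.y_pos
  have hη := H.η_pos
  refine Potential.paysRoot_of_sum_le H.w_pos ?_
  have hcube := H.sum_compl_cube_div_le D
  have hcube0 : 0 ≤ (∑ v ∈ Dᶜ, w v ^ 3) / y :=
    div_nonneg (Finset.sum_nonneg fun v _ => (pow_pos (H.w_pos v) 3).le) hy.le
  have hsq : 3 / 4 * y ^ 3 - η * y ^ 2 ≤ ∑ v ∈ Dᶜ, w v ^ 2 := by
    linarith [H.le_sum_sq, Finset.sum_add_sum_compl D fun u => w u ^ 2]
  have hf : η * f * y ^ 2 ≤ y ^ 3 / 8 := by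
    have hηf : η * f ≤ y / 8 := by nlinarith [H.f_le, H.δ_le, H.η_le, H.f_pos]
    nlinarith [mul_le_mul_of_nonneg_right hηf (sq_nonneg y)]
  calc ∑ v ∈ Dᶜ, w v * (Real.exp (-(w v / y)) - 1)
      ≤ ∑ v ∈ Dᶜ, w v * (-(w v / y) + (w v / y) ^ 2 / 2) := by
        refine Finset.sum_le_sum fun v _ => mul_le_mul_of_nonneg_left ?_ (H.w_pos v).le
        linarith [exp_neg_le_quadratic (H.w_div_y_nonneg v)]
    _ = (-(∑ v ∈ Dᶜ, w v ^ 2) + (∑ v ∈ Dᶜ, w v ^ 3) / y / 2) / y := by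
        rw [← Finset.sum_neg_distrib, Finset.sum_div, Finset.sum_div, ← Finset.sum_add_distrib,
          Finset.sum_div]
        exact Finset.sum_congr rfl fun v _ => by ring
    _ ≤ -(y ^ 3 / 4) / y := div_le_div_of_nonneg_right (by linarith [pow_pos hy 3]) hy.le
    _ = -(1 / (4 * y)) * y ^ 3 := by field_simp
    _ ≤ -(1 / (4 * y)) * ∑ v ∈ Dᶜ, w v := by
        refine mul_le_mul_of_nonpos_left ?_ (neg_nonpos.2 (by positivity))
        rw [← H.sum_w]
        exact Finset.sum_le_univ_sum_of_nonneg fun i => (H.w_pos i).le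

lemma paysRoot_massUpper (H : NearCritical w y f C η K δ) {D : Finset (Fin n)}
    (hD : ∑ u ∈ D, w u ≤ y ^ 3 / 2) : (massUpper w y f C η).PaysRoot w Dᶜ := by
  have hy := H.y_pos
  refine Potential.paysRoot_of_sum_le H.w_pos ?_
  have hsum : y ^ 3 / 2 ≤ ∑ v ∈ Dᶜ, w v := by
    linarith [H.sum_w, Finset.sum_add_sum_compl D w]
  have hsq : ∑ v ∈ Dᶜ, w v ^ 2 ≤ 3 / 2 * y ^ 3 := by
    have huniv := Finset.sum_le_univ_sum_of_nonneg (s := Dᶜ) fun i => sq_nonneg (w i)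
    have hη : η * y ^ 2 ≤ y ^ 3 / 2 := by nlinarith [H.η_le, H.one_le_y, sq_nonneg y]
    linarith [H.sum_sq_le]
  calc ∑ v ∈ Dᶜ, w v * (Real.exp (w v / y) - 1)
      ≤ ∑ v ∈ Dᶜ, w v * (4 / 3 * (w v / y)) := by
        refine Finset.sum_le_sum fun v _ => mul_le_mul_of_nonneg_left ?_ (H.w_pos v).le
        have h0 := H.w_div_y_nonneg v
        have hle : w v / y ≤ 1 / 3 := by linarith [H.w_div_y_le v, H.δ_le, H.η_le]
        nlinarith [exp_sub_one_le_add_sq h0 (by linarith)]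
    _ = 4 / 3 / y * ∑ v ∈ Dᶜ, w v ^ 2 := by
        rw [Finset.mul_sum]
        exact Finset.sum_congr rfl fun v _ => by ring
    _ ≤ 4 / 3 / y * (3 / 2 * y ^ 3) := mul_le_mul_of_nonneg_left hsq (by positivity)
    _ = 4 / y * (y ^ 3 / 2) := by ring
    _ ≤ 4 / y * ∑ v ∈ Dᶜ, w v := mul_le_mul_of_nonneg_left hsum (by positivity)

end NearCritical

end Statistics

/-! ### Concentration of the exploration -/

section Concentration

open ExplorationState

variable {n : ℕ} {w : Fin n → ℝ} {y f C η K δ g x : ℝ} {e : Exploration n}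

lemma Exploration.exploredWeight_nonneg (hw : ∀ i, 0 < w i) : 0 ≤ e.exploredWeight w :=
  Finset.sum_nonneg fun i _ => (hw i).le

lemma Exploration.exploredWeight_le (hw : ∀ i, 0 < w i) :
    e.exploredWeight w ≤ ∑ u ∈ e.discovered, w u :=
  Finset.sum_le_sum_of_subset_of_nonneg Finset.subset_union_left fun i _ _ => (hw i).le

lemma Exploration.discovered_of_queue_eq_empty (hQ : e.queue = ∅) : e.discovered = e.explored := by
  rw [discovered, hQ, Finset.union_empty]

/-- The statistics of the state `e` of the exploration follow their deterministic approximations,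
as functions of the weight explored so far and of the number of roots, up to errors which are
proportional to `x`. The size of the queue is expressed through the weight of all the discovered
vertices. -/
structure IsConcentrated (w : Fin n → ℝ) (y f C η x : ℝ) (e : Exploration n) : Prop where
  sum_sq_le : ∑ u ∈ e.discovered, w u ^ 2
    ≤ C * (1 + 4 * η) * e.exploredWeight w + 8 * C * e.roots + x * y ^ 2
  le_sum_sq : C * (1 - 4 * η) * e.exploredWeight w - x * y ^ 2 ≤ ∑ u ∈ e.discovered, w u ^ 2
  card_le : (e.discovered.card : ℝ) ≤ (1 + η) * e.exploredWeight w + e.roots + x * y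
  le_card : (1 - 4 * η) * e.exploredWeight w - x * y ≤ e.discovered.card
  le_sum : e.exploredWeight w + ((1 - 8 * η) * f / y * e.exploredWeight w
    - C * (1 + 6 * η) / (2 * y ^ 3) * e.exploredWeight w ^ 2) + e.roots / 4 - x * y
      ≤ ∑ u ∈ e.discovered, w u
  sum_le : ∑ u ∈ e.discovered, w u
    ≤ e.exploredWeight w + ((1 + 8 * η) * f / y * e.exploredWeight w
      - C * (1 - 4 * η) / (2 * y ^ 3) * e.exploredWeight w ^ 2) + 4 * e.roots + x * y

/-- The potentials controlling the statistics of `IsConcentrated`, in the order of its fields. -/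
noncomputable def statisticPotential (w : Fin n → ℝ) (y f C η K : ℝ) : Fin 6 → Potential n :=
  ![squareUpper w y C η, squareLower w y C η K, countUpper n y η, countLower n y η,
    massLower w y f C η, massUpper w y f C η]

lemma exponent_squareUpper (w : Fin n → ℝ) (y C η : ℝ) (e : Exploration n) :
    (squareUpper w y C η).exponent w e = (∑ u ∈ e.discovered, w u ^ 2
      - C * (1 + 4 * η) * e.exploredWeight w - 8 * C * e.roots) / y ^ 2 := by
  simp only [Potential.exponent, squareUpper, ← Finset.sum_div]
  ring

lemma le_exponent_squareLower (w : Fin n → ℝ) (y C η K : ℝ) (e : Exploration n) :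
    (C * (1 - 4 * η) * e.exploredWeight w - ∑ u ∈ e.discovered, w u ^ 2) / y ^ 2
      ≤ (squareLower w y C η K).exponent w e := by
  have hle : ∑ u ∈ e.discovered, (if w u ≤ K then w u ^ 2 / y ^ 2 else 0)
      ≤ (∑ u ∈ e.discovered, w u ^ 2) / y ^ 2 := by
    rw [Finset.sum_div]
    refine Finset.sum_le_sum fun u _ => ?_
    split_ifs
    exacts [le_rfl, by positivity]
  simp only [Potential.exponent, squareLower, Finset.sum_neg_distrib]
  linear_combination hle

lemma exponent_countUpper (w : Fin n → ℝ) (y η : ℝ) (e : Exploration n) :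
    (countUpper n y η).exponent w e
      = (e.discovered.card - (1 + η) * e.exploredWeight w - e.roots) / y := by
  simp only [Potential.exponent, countUpper, Finset.sum_const, nsmul_eq_mul]
  ring

lemma exponent_countLower (w : Fin n → ℝ) (y η : ℝ) (e : Exploration n) :
    (countLower n y η).exponent w e
      = ((1 - 4 * η) * e.exploredWeight w - e.discovered.card) / y := by
  simp only [Potential.exponent, countLower, Finset.sum_const, nsmul_eq_mul]
  ring

lemma exponent_massLower (w : Fin n → ℝ) (y f C η : ℝ) (e : Exploration n) :
    (massLower w y f C η).exponent w e
      = (e.exploredWeight w + ((1 - 8 * η) * f / y * e.exploredWeight w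
        - C * (1 + 6 * η) / (2 * y ^ 3) * e.exploredWeight w ^ 2) + e.roots / 4
        - ∑ u ∈ e.discovered, w u) / y := by
  simp only [Potential.exponent, massLower, Finset.sum_neg_distrib, ← Finset.sum_div]
  ring

lemma exponent_massUpper (w : Fin n → ℝ) (y f C η : ℝ) (e : Exploration n) :
    (massUpper w y f C η).exponent w e
      = (∑ u ∈ e.discovered, w u - e.exploredWeight w
        - ((1 + 8 * η) * f / y * e.exploredWeight w
          - C * (1 - 4 * η) / (2 * y ^ 3) * e.exploredWeight w ^ 2) - 4 * e.roots) / y := by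
  simp only [Potential.exponent, massUpper, ← Finset.sum_div]
  ring

lemma isConcentrated_of_exponent_lt (hy : 0 < y)
    (h : ∀ i, (statisticPotential w y f C η K i).exponent w e < x) :
    IsConcentrated w y f C η x e where
  sum_sq_le := by
    have := (exponent_squareUpper w y C η e).symm.trans_lt (h 0)
    rw [div_lt_iff₀ (pow_pos hy 2)] at this
    linarith
  le_sum_sq := by
    have := (le_exponent_squareLower w y C η K e).trans_lt (h 1)
    rw [div_lt_iff₀ (pow_pos hy 2)] at this
    linarith
  card_le := by
    have := (exponent_countUpper w y η e).symm.trans_lt (h 2)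
    rw [div_lt_iff₀ hy] at this
    linarith
  le_card := by
    have := (exponent_countLower w y η e).symm.trans_lt (h 3)
    rw [div_lt_iff₀ hy] at this
    linarith
  le_sum := by
    have := (exponent_massLower w y f C η e).symm.trans_lt (h 4)
    rw [div_lt_iff₀ hy] at this
    linarith
  sum_le := by
    have := (exponent_massUpper w y f C η e).symm.trans_lt (h 5)
    rw [div_lt_iff₀ hy] at this
    linarith

/-- The relation between the error level `x` of the statistics and the parameter `g`, which
measures how early the exploration of the giant component starts. -/
structure IsErrorLevel (f C η g x : ℝ) : Prop where
  pos : 0 < x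
  one_le_g : 1 ≤ g
  g_le : g ≤ f
  mul_four_le : 4 * x ≤ g
  mul_C_le : x * C ≤ η * g
  le_ηf : x ≤ η * f

lemma NearCritical.mul_le_of_quadratic_le (H : NearCritical w y f C η K δ) {t m : ℝ}
    (hm : m ≤ f * y + 1) (hx : x ≤ f)
    (h : C * (1 - 4 * η) / (2 * y ^ 3) * t ^ 2 - (1 + 8 * η) * f / y * t ≤ x * y + 4 * m) :
    C * t ≤ (2 + 100 * η) * (f * y ^ 2) := by
  by_contra! hlt
  have hy := H.y_pos
  have hf := H.f_pos
  have hC := H.C_pos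
  have hη := H.η_pos
  have hηle := H.η_le
  have hfy : 1 ≤ f * y := one_le_mul_of_one_le_of_one_le H.one_le_f H.one_le_y
  have hslope : 35 * η * (f / y)
      ≤ (1 - 4 * η) / (2 * y ^ 3) * (C * t) - (1 + 8 * η) * (f / y) := by
    have hmul := mul_le_mul_of_nonneg_left hlt.le
      (div_nonneg (by linarith) (by positivity) : 0 ≤ (1 - 4 * η) / (2 * y ^ 3))
    have heq : (1 - 4 * η) / (2 * y ^ 3) * ((2 + 100 * η) * (f * y ^ 2))
        = (1 - 4 * η) * (1 + 50 * η) * (f / y) := by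
      field_simp
      ring
    have hcoeff : 35 * η + (1 + 8 * η) ≤ (1 - 4 * η) * (1 + 50 * η) := by nlinarith
    nlinarith [mul_le_mul_of_nonneg_right hcoeff H.f_div_y_pos.le]
  have hlarge : 140 * C * (f * y) ≤ C * (9 * (f * y)) :=
    calc 140 * C * (f * y) ≤ 70 * (η * f) * (f * y) :=
          mul_le_mul_of_nonneg_right (by linarith [H.le_ηf]) (by positivity)
      _ = 35 * η * (f / y) * (2 * (f * y ^ 2)) := by field_simp; ring
      _ ≤ ((1 - 4 * η) / (2 * y ^ 3) * (C * t) - (1 + 8 * η) * (f / y)) * (C * t) :=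
          mul_le_mul hslope (by nlinarith [mul_pos hf (pow_pos hy 2)]) (by positivity)
            (le_trans (by positivity) hslope)
      _ = C * (C * (1 - 4 * η) / (2 * y ^ 3) * t ^ 2 - (1 + 8 * η) * f / y * t) := by ring
      _ ≤ C * (9 * (f * y)) := mul_le_mul_of_nonneg_left (by nlinarith) hC.le
  nlinarith [mul_pos hC (mul_pos hf hy)]

namespace IsConcentrated

variable (H : NearCritical w y f C η K δ) (L : IsErrorLevel f C η g x)
  (E : IsConcentrated w y f C η x e) (hroots : (e.roots : ℝ) ≤ f * y + 1)

include H L E hroots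

lemma mul_exploredWeight_le : C * e.exploredWeight w ≤ (2 + 100 * η) * (f * y ^ 2) := by
  refine H.mul_le_of_quadratic_le hroots (x := x)
    (by linarith [L.mul_four_le, L.g_le, L.pos]) ?_
  linarith [E.sum_le, Exploration.exploredWeight_le (e := e) H.w_pos]

lemma sum_sq_le_add : ∑ u ∈ e.discovered, w u ^ 2
    ≤ C * (1 + 4 * η) * e.exploredWeight w + 2 * η * f * y ^ 2 := by
  have hy := H.y_pos
  have hf := H.f_pos
  have hfy : 1 ≤ f * y := one_le_mul_of_one_le_of_one_le H.one_le_f H.one_le_y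
  have hcost : 8 * C * e.roots ≤ η * f * y ^ 2 :=
    calc 8 * C * e.roots ≤ 8 * C * (2 * (f * y)) := by
          have := H.C_pos
          gcongr
          linarith
      _ = 16 * C * (f * y) := by ring
      _ ≤ η * y * (f * y) := mul_le_mul_of_nonneg_right H.C_le_ηy (mul_pos hf hy).le
      _ = η * f * y ^ 2 := by ring
  linarith [E.sum_sq_le, mul_le_mul_of_nonneg_right L.le_ηf (sq_nonneg y)]

lemma sum_sq_le_three_mul : ∑ u ∈ e.discovered, w u ^ 2 ≤ 3 * (f * y ^ 2) := by
  have hη := H.η_pos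
  have hfy2 : 0 ≤ f * y ^ 2 := mul_nonneg H.f_pos.le (sq_nonneg y)
  have hcoeff : (1 + 4 * η) * (2 + 100 * η) + 2 * η ≤ 3 := by nlinarith [H.η_le]
  have ht := mul_le_mul_of_nonneg_left (E.mul_exploredWeight_le H L hroots)
    (by positivity : 0 ≤ 1 + 4 * η)
  linarith [E.sum_sq_le_add H L hroots, mul_le_mul_of_nonneg_right hcoeff hfy2]

lemma sum_sq_le_three_mul_cube : ∑ u ∈ e.discovered, w u ^ 2 ≤ 3 * δ * y ^ 3 := by
  linarith [E.sum_sq_le_three_mul H L hroots,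
    mul_le_mul_of_nonneg_right H.f_le (sq_nonneg y)]

lemma mul_card_discovered_le : C * (e.discovered.card : ℝ) ≤ (2 + 200 * η) * (f * y ^ 2) := by
  have hC := H.C_pos
  have hη := H.η_pos
  have hy := H.y_pos
  have hf := H.f_pos
  have hfy : 1 ≤ f * y := one_le_mul_of_one_le_of_one_le H.one_le_f H.one_le_y
  have herror : C * (e.roots + x * y) ≤ η * (f * y ^ 2) :=
    calc C * (e.roots + x * y) ≤ C * (3 * (f * y)) := by
          have hxy : x * y ≤ f * y := mul_le_mul_of_nonneg_right
            (by linarith [L.mul_four_le, L.g_le, L.pos]) hy.le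
          gcongr
          linarith
      _ = 3 * C * (f * y) := by ring
      _ ≤ η * y * (f * y) := mul_le_mul_of_nonneg_right (by linarith [H.C_le_ηy]) (by positivity)
      _ = η * (f * y ^ 2) := by ring
  have hcoeff : (1 + η) * (2 + 100 * η) + η ≤ 2 + 200 * η := by nlinarith [H.η_le]
  calc C * (e.discovered.card : ℝ)
      ≤ C * ((1 + η) * e.exploredWeight w + e.roots + x * y) :=
        mul_le_mul_of_nonneg_left E.card_le hC.le
    _ = (1 + η) * (C * e.exploredWeight w) + C * (e.roots + x * y) := by ring
    _ ≤ (1 + η) * ((2 + 100 * η) * (f * y ^ 2)) + η * (f * y ^ 2) :=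
        add_le_add (mul_le_mul_of_nonneg_left (E.mul_exploredWeight_le H L hroots) (by positivity))
          herror
    _ = ((1 + η) * (2 + 100 * η) + η) * (f * y ^ 2) := by ring
    _ ≤ (2 + 200 * η) * (f * y ^ 2) := mul_le_mul_of_nonneg_right hcoeff (by positivity)

lemma sum_discovered_le : ∑ u ∈ e.discovered, w u ≤ η * y ^ 3 := by
  have hC := H.C_pos
  have hy := H.y_pos
  have hηle := H.η_le
  have hamgm : ∑ u ∈ e.discovered, w u
      ≤ (∑ u ∈ e.discovered, w u ^ 2 + e.discovered.card) / 2 := by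
    rw [Finset.cast_card, ← Finset.sum_add_distrib, Finset.sum_div]
    exact Finset.sum_le_sum fun u _ => by nlinarith [sq_nonneg (w u - 1)]
  have hfy : f * y ^ 2 ≤ δ * y ^ 3 := by
    linarith [mul_le_mul_of_nonneg_right H.f_le (sq_nonneg y)]
  refine hamgm.trans (le_of_mul_le_mul_left ?_ hC)
  calc C * ((∑ u ∈ e.discovered, w u ^ 2 + e.discovered.card) / 2)
      = (C * ∑ u ∈ e.discovered, w u ^ 2 + C * e.discovered.card) / 2 := by ring
    _ ≤ (C * (3 * (f * y ^ 2)) + 3 * (f * y ^ 2)) / 2 := by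
        have hsq := mul_le_mul_of_nonneg_left (E.sum_sq_le_three_mul H L hroots) hC.le
        have hcard := E.mul_card_discovered_le H L hroots
        have : 0 ≤ f * y ^ 2 := mul_nonneg H.f_pos.le (sq_nonneg y)
        nlinarith
    _ = (3 + 3 * C) * (f * y ^ 2) / 2 := by ring
    _ ≤ (3 + 3 * C) * (δ * y ^ 3) / 2 := by gcongr
    _ = δ * (3 + 3 * C) * y ^ 3 / 2 := by ring
    _ ≤ 2 * η * C * y ^ 3 / 2 := by gcongr ?_ * _ / _; exact H.δ_mul_le
    _ = C * (η * y ^ 3) := by ring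

lemma sum_discovered_le_half : ∑ u ∈ e.discovered, w u ≤ y ^ 3 / 2 := by
  have hη := mul_le_mul_of_nonneg_right H.η_le (pow_pos H.y_pos 3).le
  linarith [E.sum_discovered_le H L hroots, pow_pos H.y_pos 3]

end IsConcentrated

end Concentration

section Conclusion

open ExplorationState

variable {n : ℕ} {w : Fin n → ℝ} {y f C η K δ g x : ℝ}

lemma NearCritical.isSupermartingaleOn_statisticPotential (H : NearCritical w y f C η K δ)
    (L : IsErrorLevel f C η g x) (i : Fin 6) :
    IsSupermartingaleOn w (criticalProb y f)
      (fun e => Real.exp ((statisticPotential w y f C η K i).exponent w e - x))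
      fun e => IsConcentrated w y f C η x e ∧ (e.roots : ℝ) ≤ f * y + 1 := by
  have ht : ∀ e : Exploration n, 0 ≤ e.exploredWeight w := fun e =>
    Exploration.exploredWeight_nonneg H.w_pos
  refine Potential.isSupermartingaleOn _ H.w_pos H.criticalProb_nonneg x ?_ ?_
  · rintro e ⟨E, hroots⟩ v
    fin_cases i
    · exact H.gain_squareUpper _ _ _
    · refine H.gain_squareLower ?_ _ _
      have hK := mul_le_mul_of_nonneg_left (E.sum_sq_le_three_mul_cube H L hroots) H.K_pos.le
      linarith [mul_le_mul_of_nonneg_right H.δ_mul_K_le (pow_pos H.y_pos 3).le]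
    · exact H.gain_countUpper _ _ _
    · exact H.gain_countLower (E.sum_discovered_le H L hroots) _ _
    · exact H.gain_massLower (ht e) (E.sum_sq_le_add H L hroots) _
    · refine H.gain_massUpper (ht e) ?_ _
      linarith [E.le_sum_sq, mul_le_mul_of_nonneg_right L.le_ηf (sq_nonneg y)]
  · rintro e ⟨E, hroots⟩ hQ
    have hsum := E.sum_discovered_le_half H L hroots
    have hsq := E.sum_sq_le_three_mul_cube H L hroots
    rw [Exploration.discovered_of_queue_eq_empty hQ] at hsum hsq
    fin_cases i
    · exact H.paysRoot_squareUpper hsum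
    · exact H.paysRoot_squareLower _
    · exact NearCritical.paysRoot_countUpper _ _ _
    · exact H.paysRoot_countLower _
    · refine H.paysRoot_massLower (hsq.trans ?_)
      nlinarith [H.δ_le, H.η_le, pow_pos H.y_pos 3]
    · exact H.paysRoot_massUpper hsum

theorem NearCritical.measure_hits_not_isConcentrated_le (H : NearCritical w y f C η K δ)
    (L : IsErrorLevel f C η g x) :
    expMeasure' n w (criticalProb y f) {ω | ∃ k, (init (List.ofFn ω.2)).Hits (graphOf ω.1)
        (fun e => ¬ IsConcentrated w y f C η x e)
        (fun e => IsConcentrated w y f C η x e ∧ (e.roots : ℝ) ≤ f * y + 1) k}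
      ≤ ENNReal.ofReal (6 * Real.exp (-x)) := by
  refine (Potential.measure_hits_le (statisticPotential w y f C η K) (a := fun _ => x) H.w_pos
    H.criticalProb_nonneg (H.isSupermartingaleOn_statisticPotential L) (fun i => ?_)
    fun e he => ?_).trans_eq ?_
  · fin_cases i <;> simp [statisticPotential, squareUpper, squareLower, countUpper, countLower,
      massLower, massUpper]
  · contrapose! he
    exact isConcentrated_of_exponent_lt H.y_pos he
  · simp

lemma forall_of_forall_not_hits {G : SimpleGraph (Fin n)} {vord : Fin n → Fin n} {M : ℝ}
    {P : Exploration n → Prop}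
    (h : ∀ k, ¬ (init (List.ofFn vord)).Hits G (fun e => ¬ P e)
      (fun e => P e ∧ (e.roots : ℝ) ≤ M) k) {k : ℕ}
    (hk : ((explorationAt G vord k).roots : ℝ) ≤ M) :
    P (explorationAt G vord k).toExploration := by
  induction k using Nat.strong_induction_on with
  | _ k ih =>
    by_contra hP
    refine h k ⟨k, le_rfl, hP, fun i hi => ?_⟩
    have hroots : ((explorationAt G vord i).roots : ℝ) ≤ M :=
      (Nat.cast_le.2 (explorationAt_roots_mono hi.le)).trans hk
    exact ⟨ih i hi hroots, hroots⟩

end Conclusion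

section EarlyExploration

open ExplorationState

variable {n : ℕ} {w : Fin n → ℝ} {y f C η K δ g x : ℝ} {e : Exploration n}

lemma NearCritical.mul_le_quadratic (H : NearCritical w y f C η K δ) {t : ℝ} (ht : 0 ≤ t)
    (htC : C * t ≤ (2 - 100 * η) * (f * y ^ 2)) :
    36 * η * (f / y * t) ≤ (1 - 8 * η) * f / y * t - C * (1 + 6 * η) / (2 * y ^ 3) * t ^ 2 := by
  have hy := H.y_pos
  have hη := H.η_pos
  have hft : 0 ≤ f / y * t := mul_nonneg H.f_div_y_pos.le ht
  have hquad : C * (1 + 6 * η) / (2 * y ^ 3) * t ^ 2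
      ≤ (1 + 6 * η) * (1 - 50 * η) * (f / y * t) :=
    calc C * (1 + 6 * η) / (2 * y ^ 3) * t ^ 2
        = (1 + 6 * η) * t / (2 * y ^ 3) * (C * t) := by ring
      _ ≤ (1 + 6 * η) * t / (2 * y ^ 3) * ((2 - 100 * η) * (f * y ^ 2)) := by gcongr
      _ = (1 + 6 * η) * (1 - 50 * η) * (f / y * t) := by field_simp; ring
  have hcoeff : (1 + 6 * η) * (1 - 50 * η) ≤ 1 - 44 * η := by nlinarith
  linear_combination hquad + mul_le_mul_of_nonneg_right hcoeff hft

namespace IsConcentrated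

variable (H : NearCritical w y f C η K δ) (L : IsErrorLevel f C η g x)
  (E : IsConcentrated w y f C η x e) (hQ : e.queue = ∅)
  (hcard : C * (e.explored.card : ℝ) ≤ (2 - 200 * η) * (f * y ^ 2))

include H L E hQ hcard

lemma mul_exploredWeight_le_of_card_le :
    C * e.exploredWeight w ≤ (2 - 100 * η) * (f * y ^ 2) := by
  have hη := H.η_pos
  have hηle := H.η_le
  have hT : 0 < f * y ^ 2 := mul_pos H.f_pos (pow_pos H.y_pos 2)
  have hle := E.le_card
  rw [Exploration.discovered_of_queue_eq_empty hQ] at hle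
  have herror : C * (x * y) ≤ η * (f * y ^ 2) :=
    calc C * (x * y) ≤ (η * y) * (f * y) := by
          refine mul_le_mul ?_ ?_ (mul_nonneg L.pos.le H.y_pos.le) (by linarith [H.le_ηy])
          · linarith [H.C_le_ηy, H.C_pos]
          · exact mul_le_mul_of_nonneg_right (by linarith [L.mul_four_le, L.g_le, L.pos])
              H.y_pos.le
      _ = η * (f * y ^ 2) := by ring
  have hcoeff : 2 - 199 * η ≤ (1 - 4 * η) * (2 - 100 * η) := by nlinarith
  have hCt := mul_le_mul_of_nonneg_left hle H.C_pos.le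
  refine le_of_mul_le_mul_left ?_ (by linarith : 0 < 1 - 4 * η)
  linear_combination hCt + hcard + herror + mul_le_mul_of_nonneg_right hcoeff hT.le

lemma mul_exploredWeight_add_roots_le :
    36 * η * (f / y * e.exploredWeight w) + e.roots / 4 ≤ x * y := by
  have hle := E.le_sum
  rw [Exploration.discovered_of_queue_eq_empty hQ] at hle
  have hdrift := H.mul_le_quadratic (Exploration.exploredWeight_nonneg H.w_pos)
    (E.mul_exploredWeight_le_of_card_le H L hQ hcard)
  simp only [Exploration.exploredWeight] at hdrift hle ⊢
  linarith

lemma roots_le : (e.roots : ℝ) ≤ f * y := by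
  have hy := H.y_pos
  have hf := H.f_pos
  have hη := H.η_pos
  have ht := Exploration.exploredWeight_nonneg (e := e) H.w_pos
  have hft : 0 ≤ 36 * η * (f / y * e.exploredWeight w) := by positivity
  have hxy : 4 * x * y ≤ f * y :=
    mul_le_mul_of_nonneg_right (L.mul_four_le.trans L.g_le) hy.le
  linarith [E.mul_exploredWeight_add_roots_le H L hQ hcard]

lemma mul_exploredWeight_le_sq_mul :
    36 * (f * C * e.exploredWeight w) ≤ y ^ 2 * g := by
  have hy := H.y_pos
  have hC := H.C_pos
  have hweight : 36 * η * (f / y * e.exploredWeight w) ≤ x * y := by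
    linarith [E.mul_exploredWeight_add_roots_le H L hQ hcard,
      (Nat.cast_nonneg e.roots : (0 : ℝ) ≤ e.roots)]
  refine le_of_mul_le_mul_left ?_ H.η_pos
  calc η * (36 * (f * C * e.exploredWeight w))
      = 36 * η * (f / y * e.exploredWeight w) * (C * y) := by field_simp
    _ ≤ x * y * (C * y) := mul_le_mul_of_nonneg_right hweight (by positivity)
    _ = x * C * y ^ 2 := by ring
    _ ≤ η * g * y ^ 2 := mul_le_mul_of_nonneg_right L.mul_C_le (by positivity)
    _ = η * (y ^ 2 * g) := by ring

lemma card_explored_add_one_le : (e.explored.card : ℝ) + 1 ≤ y ^ 2 * g / (f * C) := by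
  have hy := H.y_pos
  have hf := H.f_pos
  have hη := H.η_pos
  have hC := H.C_pos
  have hg : 0 < g := zero_lt_one.trans_le L.one_le_g
  have ht : 0 ≤ e.exploredWeight w := Exploration.exploredWeight_nonneg H.w_pos
  have hroots : (e.roots : ℝ) / 4 ≤ x * y := by
    have hft : 0 ≤ 36 * η * (f / y * e.exploredWeight w) := by positivity
    linarith [E.mul_exploredWeight_add_roots_le H L hQ hcard]
  have hcount : (e.explored.card : ℝ) + 1 ≤ 18 * e.exploredWeight w + 3 * (g * y) := by
    have hle := E.card_le
    rw [Exploration.discovered_of_queue_eq_empty hQ] at hle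
    have hxy : 4 * x * y ≤ g * y := mul_le_mul_of_nonneg_right L.mul_four_le hy.le
    have hgy : 1 ≤ g * y := one_le_mul_of_one_le_of_one_le L.one_le_g H.one_le_y
    nlinarith [H.η_le]
  have hfC : 6 * (f * C) ≤ y :=
    calc 6 * (f * C) ≤ 6 * (δ * y * C) := by gcongr; exact H.f_le
      _ = 6 * δ * C * y := by ring
      _ ≤ y := mul_le_of_le_one_left hy.le H.δ_mul_C_le
  rw [le_div_iff₀ (by positivity)]
  calc ((e.explored.card : ℝ) + 1) * (f * C)
      ≤ (18 * e.exploredWeight w + 3 * (g * y)) * (f * C) := by gcongr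
    _ = 36 * (f * C * e.exploredWeight w) / 2 + g * y / 2 * (6 * (f * C)) := by ring
    _ ≤ y ^ 2 * g / 2 + g * y / 2 * y :=
        add_le_add (by linarith [E.mul_exploredWeight_le_sq_mul H L hQ hcard])
          (mul_le_mul_of_nonneg_left hfC (by positivity))
    _ = y ^ 2 * g := by ring

end IsConcentrated

end EarlyExploration

/-- The component being explored at time `⌊T⌋` has its first vertex explored by time `s`, and its
last vertex explored between the times `a` and `b`. -/
def ExploredBetween {n : ℕ} (G : SimpleGraph (Fin n)) (vord : Fin n → Fin n) (T s a b : ℝ) : Prop :=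
  ∀ c : G.ConnectedComponent,
    (startT G vord c < ⌊T⌋₊ ∧ ⌊T⌋₊ ≤ startT G vord c + csize G c) →
      (startT G vord c : ℝ) + 1 ≤ s ∧ a ≤ ((startT G vord c + csize G c : ℕ) : ℝ) ∧
        ((startT G vord c + csize G c : ℕ) : ℝ) ≤ b

lemma ExploredBetween.mono {n : ℕ} {G : SimpleGraph (Fin n)} {vord : Fin n → Fin n}
    {T s s' a a' b b' : ℝ} (h : ExploredBetween G vord T s a b) (hs : s ≤ s') (ha : a' ≤ a)
    (hb : b ≤ b') : ExploredBetween G vord T s' a' b' := fun c hc =>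
  have ⟨hstart, hle, hend⟩ := h c hc
  ⟨hstart.trans hs, ha.trans hle, hend.trans hb⟩

section ExplorationTimes

open ExplorationState

variable {n : ℕ} {w : Fin n → ℝ} {y f C η K δ g x : ℝ} {G : SimpleGraph (Fin n)}
  {vord : Fin n → Fin n} (H : NearCritical w y f C η K δ) (L : IsErrorLevel f C η g x)
  (hE : ∀ k, ((explorationAt G vord k).roots : ℝ) ≤ f * y + 1 →
    IsConcentrated w y f C η x (explorationAt G vord k).toExploration)

include H L hE

lemma roots_explorationAt_le {k : ℕ} (hQ : (explorationAt G vord k).queue = ∅)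
    (hcard : C * ((explorationAt G vord k).explored.card : ℝ) ≤ (2 - 200 * η) * (f * y ^ 2)) :
    ((explorationAt G vord k).roots : ℝ) ≤ f * y := by
  have hfy : 0 < f * y := mul_pos H.f_pos H.y_pos
  have hroots : ((explorationAt G vord k).roots : ℝ) ≤ f * y + 1 := by
    by_contra! hlt
    obtain ⟨j, hjk, hjQ, hj, hjlt⟩ :=
      exists_queue_eq_empty_and_lt_roots_add_one (by linarith) hlt
    have hcard_le : ((explorationAt G vord j).explored.card : ℝ)
        ≤ (explorationAt G vord k).explored.card :=
      Nat.cast_le.2 (Finset.card_le_card (explorationAt_explored_mono hjk.le))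
    linarith [(hE j hj).roots_le H L hjQ
      ((mul_le_mul_of_nonneg_left hcard_le H.C_pos.le).trans hcard)]
  exact (hE k hroots).roots_le H L hQ hcard

theorem exploredBetween_of_isConcentrated (hs : Function.Surjective vord) :
    ExploredBetween G vord (f * y ^ 2 / C) (y ^ 2 * g / (f * C)) ((2 - 200 * η) * (f * y ^ 2) / C)
      ((2 + 200 * η) * (f * y ^ 2) / C) := by
  intro c ⟨hstart, hend⟩
  have hC := H.C_pos
  have hf := H.f_pos
  have hy := H.y_pos
  obtain ⟨k, k', hQ, hQ', hroots', hcard, hcard'⟩ := exists_explorationAt_component hs c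
  rw [← hcard'] at hend ⊢
  rw [← hcard] at hstart ⊢
  have hk : C * ((explorationAt G vord k).explored.card : ℝ)
      ≤ (2 - 200 * η) * (f * y ^ 2) := by
    have hfloor : ((explorationAt G vord k).explored.card : ℝ) ≤ f * y ^ 2 / C :=
      (Nat.cast_le.2 hstart.le).trans (Nat.floor_le (by positivity))
    rw [le_div_iff₀' hC] at hfloor
    exact hfloor.trans (le_mul_of_one_le_left (by positivity) (by linarith [H.η_le]))
  have hroots := roots_explorationAt_le H L hE hQ hk
  have hEk := hE k (by linarith)
  have hroots'_le : ((explorationAt G vord k').roots : ℝ) ≤ f * y + 1 := by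
    rw [hroots']
    push_cast
    linarith
  have hEk' := hE k' hroots'_le
  have hupper := hEk'.mul_card_discovered_le H L hroots'_le
  rw [Exploration.discovered_of_queue_eq_empty hQ'] at hupper
  refine ⟨hEk.card_explored_add_one_le H L hQ hk, ?_, (le_div_iff₀' hC).2 hupper⟩
  rw [div_le_iff₀' hC]
  by_contra! hlt
  have hsmall := hEk'.card_explored_add_one_le H L hQ' hlt.le
  have hlate : f * y ^ 2 / C < (explorationAt G vord k').explored.card + 1 :=
    (Nat.lt_floor_add_one _).trans_le (by gcongr)
  have hcompare : y ^ 2 * g / (f * C) ≤ f * y ^ 2 / C := by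
    rw [div_le_div_iff₀ (by positivity) hC]
    have hg : g ≤ f * f := by nlinarith [L.g_le, H.one_le_f]
    calc y ^ 2 * g * C ≤ y ^ 2 * (f * f) * C := by gcongr
      _ = f * y ^ 2 * (f * C) := by ring
  linarith

end ExplorationTimes

theorem NearCritical.measure_not_exploredBetween_le {n : ℕ} {w : Fin n → ℝ}
    {y f C η K δ g x : ℝ} (H : NearCritical w y f C η K δ) (L : IsErrorLevel f C η g x) :
    expMeasure' n w (criticalProb y f) {ω | ¬ ExploredBetween (graphOf ω.1) ω.2 (f * y ^ 2 / C)
        (y ^ 2 * g / (f * C)) ((2 - 200 * η) * (f * y ^ 2) / C) ((2 + 200 * η) * (f * y ^ 2) / C)}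
      ≤ ENNReal.ofReal (6 * Real.exp (-x)) := by
  set hitting : Set ((Fin n → Fin n → Bool) × (Fin n → Fin n)) :=
    {ω | ∃ k, (ExplorationState.init (List.ofFn ω.2)).Hits (graphOf ω.1)
      (fun e => ¬ IsConcentrated w y f C η x e)
      (fun e => IsConcentrated w y f C η x e ∧ (e.roots : ℝ) ≤ f * y + 1) k}
  refine (measure_mono (t := hitting ∪ {ω | ¬ Function.Surjective ω.2})
    fun ω hω => ?_).trans ((measure_union_le _ _).trans ?_)
  · by_contra hnot
    simp only [hitting, Set.mem_union, Set.mem_ofPred_eq, not_or, not_exists, not_not] at hnot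
    exact hω (exploredBetween_of_isConcentrated H L (fun _ => forall_of_forall_not_hits hnot.1)
      hnot.2)
  · rw [expMeasure'_not_surjective, add_zero]
    exact H.measure_hits_not_isConcentrated_le L

/-! ### Asymptotics under Conditions (C) -/

section Asymptotics

lemma integral_pos_of_ae_pos {α : Type*} {m : MeasurableSpace α} {μ : Measure α} [NeZero μ]
    {f : α → ℝ} (hf : ∀ᵐ x ∂μ, 0 < f x) (hfi : Integrable f μ) : 0 < ∫ x, f x ∂μ := by
  rw [integral_pos_iff_support_of_nonneg_ae (hf.mono fun _ hx => hx.le) hfi, pos_iff_ne_zero]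
  intro h
  have hfalse : ∀ᵐ _ ∂μ, False := by
    filter_upwards [measure_eq_zero_iff_ae_notMem.1 h, hf] with x hx hfx
    exact hx hfx.ne'
  exact NeZero.ne μ (ae_eq_bot.1 (eventually_false_iff_eq_bot.1 hfalse))

lemma rpow_isLittleO_id {r : ℝ} (hr : r < 1) :
    (fun n : ℕ => (n : ℝ) ^ r) =o[atTop] fun n : ℕ => (n : ℝ) := by
  have hone : (fun _ : ℕ => (1 : ℝ)) =o[atTop] fun n : ℕ => (n : ℝ) ^ (1 - r) :=
    (isLittleO_const_left_of_ne one_ne_zero).2 (tendsto_norm_atTop_atTop.comp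
      ((tendsto_rpow_atTop (sub_pos.2 hr)).comp tendsto_natCast_atTop_atTop))
  refine ((isBigO_refl (fun n : ℕ => (n : ℝ) ^ r) atTop).mul_isLittleO hone).congr' ?_ ?_
  · exact .of_forall fun n => mul_one _
  · filter_upwards [eventually_gt_atTop 0] with n hn
    rw [← Real.rpow_add (Nat.cast_pos.2 hn), add_sub_cancel, Real.rpow_one]

lemma tendsto_div_of_isLittleO_sub {a : ℕ → ℝ} {α : ℝ}
    (h : (fun n : ℕ => a n - α * n) =o[atTop] fun n : ℕ => (n : ℝ)) :
    Tendsto (fun n : ℕ => a n / n) atTop (𝓝 α) := by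
  have hlim := h.tendsto_div_nhds_zero.add_const α
  rw [zero_add] at hlim
  refine hlim.congr' ?_
  filter_upwards [eventually_ne_atTop 0] with n hn
  field_simp
  ring

lemma eventually_le_of_tendsto_div {a b : ℕ → ℝ} {α β : ℝ}
    (ha : Tendsto (fun n : ℕ => a n / n) atTop (𝓝 α))
    (hb : Tendsto (fun n : ℕ => b n / n) atTop (𝓝 β)) (h : α < β) : ∀ᶠ n in atTop, a n ≤ b n := by
  filter_upwards [ha.eventually_lt hb h, eventually_gt_atTop 0] with n hlt hn
  exact ((div_lt_div_iff_of_pos_right (Nat.cast_pos.2 hn)).1 hlt).le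

/-- A continuous function with values in `[0, k]` which vanishes outside `[0, k]` and lies below
the cube on `[0, ∞)`; it increases to the cube there as `k → ∞`. -/
noncomputable def truncatedCube (k : ℕ) : BoundedContinuousFunction ℝ ℝ :=
  .ofNormedAddCommGroup (fun x => max 0 (min (x ^ 3) (k - x))) (by fun_prop) k fun x => by
    rw [Real.norm_of_nonneg (le_max_left _ _)]
    refine max_le k.cast_nonneg ?_
    rcases le_total 0 x with hx | hx
    · exact (min_le_right _ _).trans (by linarith)
    · exact (min_le_left _ _).trans ((Odd.pow_nonpos (by decide) hx).trans k.cast_nonneg)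

lemma truncatedCube_apply (k : ℕ) (x : ℝ) :
    truncatedCube k x = max 0 (min (x ^ 3) (k - x)) := rfl

lemma truncatedCube_nonneg (k : ℕ) (x : ℝ) : 0 ≤ truncatedCube k x := le_max_left _ _

lemma truncatedCube_le {x : ℝ} (hx : 0 ≤ x) (k : ℕ) : truncatedCube k x ≤ x ^ 3 :=
  max_le (pow_nonneg hx 3) (min_le_left _ _)

lemma truncatedCube_of_le {k : ℕ} {x : ℝ} (h : (k : ℝ) ≤ x) : truncatedCube k x = 0 :=
  max_eq_left ((min_le_right _ _).trans (sub_nonpos.2 h))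

lemma tendsto_truncatedCube {x : ℝ} (hx : 0 ≤ x) :
    Tendsto (fun k => truncatedCube k x) atTop (𝓝 (x ^ 3)) := by
  refine tendsto_const_nhds.congr' ?_
  filter_upwards [(tendsto_natCast_atTop_atTop (R := ℝ)).eventually_ge_atTop (x ^ 3 + x)] with k hk
  rw [truncatedCube_apply, min_eq_left (by linarith), max_eq_right (pow_nonneg hx 3)]

end Asymptotics

namespace CondC

variable {w : ∀ n : ℕ, Fin n → ℝ} {μ : Measure ℝ} (hC : CondC w μ)

include hC

lemma integrable_id : Integrable (fun x : ℝ => x) μ := by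
  have := hC.isProb
  refine ((integrable_const 1).add hC.int3.abs).mono' (by fun_prop) (ae_of_all _ fun x => ?_)
  rw [Pi.add_apply, Real.norm_eq_abs, abs_pow]
  rcases le_total |x| 1 with h | h
  · linarith [pow_nonneg (abs_nonneg x) 3]
  · linarith [le_self_pow₀ h three_ne_zero]

lemma integral_id_pos : 0 < ∫ x, x ∂μ :=
  have := hC.isProb
  integral_pos_of_ae_pos hC.pos hC.integrable_id

lemma integral_cube_pos : 0 < ∫ x, x ^ 3 ∂μ :=
  have := hC.isProb
  integral_pos_of_ae_pos (hC.pos.mono fun _ hx => pow_pos hx 3) hC.int3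

lemma Cconst_pos : 0 < Cconst μ := div_pos hC.integral_cube_pos hC.integral_id_pos

lemma Cconst_mul_integral_id : Cconst μ * ∫ x, x ∂μ = ∫ x, x ^ 3 ∂μ :=
  div_mul_cancel₀ _ hC.integral_id_pos.ne'

lemma ell_nonneg (n : ℕ) : 0 ≤ ell w n := Finset.sum_nonneg fun i _ => (hC.w_pos n i).le

lemma tendsto_ell_div : Tendsto (fun n : ℕ => ell w n / n) atTop (𝓝 (∫ x, x ∂μ)) :=
  tendsto_div_of_isLittleO_sub (hC.ell_asymp.trans (rpow_isLittleO_id (by norm_num)))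

lemma tendsto_sum_cube_div :
    Tendsto (fun n : ℕ => (∑ i, w n i ^ 3) / n) atTop (𝓝 (∫ x, x ^ 3 ∂μ)) := by
  refine tendsto_div_of_isLittleO_sub (hC.cube_asymp.trans ?_)
  simpa using rpow_isLittleO_id zero_lt_one

lemma tendsto_mul_ell_div (c : ℝ) : Tendsto (fun n : ℕ => Cconst μ * c * ell w n / n) atTop
    (𝓝 (c * ∫ x, x ^ 3 ∂μ)) := by
  rw [← hC.Cconst_mul_integral_id, ← mul_assoc, mul_comm c]
  simpa only [mul_div_assoc] using hC.tendsto_ell_div.const_mul (Cconst μ * c)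

lemma tendsto_integral_truncatedCube :
    Tendsto (fun k => ∫ x, truncatedCube k x ∂μ) atTop (𝓝 (∫ x, x ^ 3 ∂μ)) := by
  refine tendsto_integral_of_dominated_convergence (fun x => x ^ 3)
    (fun k => (truncatedCube k).continuous.aestronglyMeasurable) hC.int3 (fun k => ?_) ?_
  · filter_upwards [hC.pos] with x hx
    rw [Real.norm_of_nonneg (truncatedCube_nonneg k x)]
    exact truncatedCube_le hx.le k
  · filter_upwards [hC.pos] with x hx
    exact tendsto_truncatedCube hx.le

lemma exists_eventually_le_sum_cube {η : ℝ} (hη : 0 < η) : ∃ K > 0, ∀ᶠ n in atTop,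
    Cconst μ * (1 - η) * ell w n ≤ ∑ i with w n i ≤ K, w n i ^ 3 := by
  have hlt : (1 - η) * ∫ x, x ^ 3 ∂μ < ∫ x, x ^ 3 ∂μ :=
    mul_lt_of_lt_one_left hC.integral_cube_pos (by linarith)
  obtain ⟨k, hk, hk_pos⟩ := ((hC.tendsto_integral_truncatedCube.eventually_const_lt hlt).and
    (eventually_gt_atTop 0)).exists
  refine ⟨k, Nat.cast_pos.2 hk_pos, ?_⟩
  filter_upwards [eventually_le_of_tendsto_div (hC.tendsto_mul_ell_div (1 - η))
    (hC.weak (truncatedCube k)) hk] with n hn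
  refine hn.trans ?_
  rw [Finset.sum_filter]
  refine Finset.sum_le_sum fun i _ => ?_
  split_ifs with h
  · exact truncatedCube_le (hC.w_pos n i).le k
  · exact (truncatedCube_of_le (not_le.1 h).le).le

lemma eventually_sum_cube_le {η : ℝ} (hη : 0 < η) : ∀ᶠ n in atTop,
    ∑ i, w n i ^ 3 ≤ Cconst μ * (1 + η) * ell w n :=
  eventually_le_of_tendsto_div hC.tendsto_sum_cube_div (hC.tendsto_mul_ell_div (1 + η))
    (lt_mul_of_one_lt_left hC.integral_cube_pos (by linarith))

lemma tendsto_ell_atTop : Tendsto (fun n => ell w n) atTop atTop := by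
  refine (hC.tendsto_ell_div.pos_mul_atTop hC.integral_id_pos tendsto_natCast_atTop_atTop).congr'
    ?_
  filter_upwards [eventually_ne_atTop 0] with n hn
  exact div_mul_cancel₀ _ (Nat.cast_ne_zero.2 hn)

lemma rpow_isBigO_ell_rpow {r : ℝ} (hr : 0 ≤ r) :
    (fun n : ℕ => (n : ℝ) ^ r) =O[atTop] fun n => ell w n ^ r := by
  refine IsBigO.rpow hr (.of_forall hC.ell_nonneg) (IsBigO.of_bound (2 / ∫ x, x ∂μ) ?_)
  have hE := hC.integral_id_pos
  filter_upwards [hC.tendsto_ell_div.eventually_const_lt (half_lt_self hE),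
    eventually_gt_atTop 0] with n hlt hn
  rw [lt_div_iff₀ (Nat.cast_pos.2 hn)] at hlt
  rw [Real.norm_of_nonneg n.cast_nonneg, Real.norm_of_nonneg (hC.ell_nonneg n),
    div_mul_eq_mul_div, le_div_iff₀ hE]
  linarith

lemma eventually_abs_sum_sq_sub_le {η : ℝ} (hη : 0 < η) : ∀ᶠ n in atTop,
    |∑ i, w n i ^ 2 - ell w n| ≤ η * ell w n ^ ((2 : ℝ) / 3) := by
  have hsq := hC.sq_asymp
  rw [hC.moment_eq] at hsq
  filter_upwards [((hsq.sub hC.ell_asymp).trans_isBigO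
    (hC.rpow_isBigO_ell_rpow (by norm_num))).bound hη] with n hn
  rwa [Real.norm_eq_abs, sub_sub_sub_cancel_right,
    Real.norm_of_nonneg (Real.rpow_nonneg (hC.ell_nonneg n) _)] at hn

lemma eventually_le_mul_ell_rpow {a : ℕ → ℝ}
    (ha : a =o[atTop] fun n : ℕ => (n : ℝ) ^ ((1 : ℝ) / 3)) {δ : ℝ} (hδ : 0 < δ) :
    ∀ᶠ n in atTop, a n ≤ δ * ell w n ^ ((1 : ℝ) / 3) := by
  filter_upwards [(ha.trans_isBigO (hC.rpow_isBigO_ell_rpow (by norm_num))).bound hδ] with n hn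
  rw [Real.norm_of_nonneg (Real.rpow_nonneg (hC.ell_nonneg n) _)] at hn
  exact (le_abs_self _).trans hn

lemma ell_rpow_third_pow_three (n : ℕ) : (ell w n ^ ((1 : ℝ) / 3)) ^ 3 = ell w n := by
  rw [← Real.rpow_mul_natCast (hC.ell_nonneg n)]
  norm_num

lemma ell_rpow_third_sq (n : ℕ) : (ell w n ^ ((1 : ℝ) / 3)) ^ 2 = ell w n ^ ((2 : ℝ) / 3) := by
  rw [← Real.rpow_mul_natCast (hC.ell_nonneg n)]
  norm_num

lemma pf_eq_criticalProb (f : ℕ → ℝ) (n : ℕ) :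
    pf w f n = criticalProb (ell w n ^ ((1 : ℝ) / 3)) (f n) := by
  rw [pf, criticalProb, ← Real.rpow_mul_natCast (hC.ell_nonneg n)]
  norm_num

end CondC

lemma exists_scale {C η K : ℝ} (hC : 0 < C) (hη : 0 < η) (hK : 0 < K) : ∃ δ > 0, δ ≤ η / 4 ∧
    δ * (3 + 3 * C) ≤ 2 * η * C ∧ 3 * K * δ ≤ η * C ∧ 6 * δ * C ≤ 1 := by
  refine ⟨min (min (η / 4) (2 * η * C / (3 + 3 * C))) (min (η * C / (3 * K)) (1 / (6 * C))),
    by positivity, ?_, ?_, ?_, ?_⟩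
  · exact (min_le_left _ _).trans (min_le_left _ _)
  · rw [← le_div_iff₀ (by positivity)]
    exact (min_le_left _ _).trans (min_le_right _ _)
  · rw [← le_div_iff₀' (by positivity)]
    exact (min_le_right _ _).trans (min_le_left _ _)
  · rw [mul_right_comm, ← le_div_iff₀' (by positivity)]
    exact (min_le_right _ _).trans (min_le_right _ _)

theorem CondC.eventually_nearCritical {w : ∀ n : ℕ, Fin n → ℝ} {μ : Measure ℝ} (hC : CondC w μ)
    {f : ℕ → ℝ} (hf : f =o[atTop] fun n : ℕ => (n : ℝ) ^ ((1 : ℝ) / 3)) {η : ℝ} (hη : 0 < η)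
    (hη_le : η ≤ 1 / 200) : ∃ K δ, ∀ᶠ n in atTop, 1 ≤ f n → η + 2 * Cconst μ ≤ η * f n →
      NearCritical (w n) (ell w n ^ ((1 : ℝ) / 3)) (f n) (Cconst μ) η K δ := by
  obtain ⟨K, hK, hKcube⟩ := hC.exists_eventually_le_sum_cube hη
  obtain ⟨δ, hδ, hδη, hδC, hKδ, hCδ⟩ := exists_scale hC.Cconst_pos hη hK
  have hy : Tendsto (fun n => ell w n ^ ((1 : ℝ) / 3)) atTop atTop :=
    (tendsto_rpow_atTop (by norm_num)).comp hC.tendsto_ell_atTop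
  refine ⟨K, δ, ?_⟩
  filter_upwards [hKcube, hC.eventually_sum_cube_le hη, hC.eventually_abs_sum_sq_sub_le hη,
    hC.eventually_le_mul_ell_rpow hf hδ, hC.eventually_le_mul_ell_rpow hC.max_asymp hδ,
    hy.eventually_ge_atTop 1, hy.eventually_ge_atTop (4 / η),
    hy.eventually_ge_atTop (16 * Cconst μ / η)]
    with n hKcube hcube hsq hfy hmax hy1 hyη hyC hf1 hfη
  have hy3 := hC.ell_rpow_third_pow_three n
  rw [← hC.ell_rpow_third_sq, abs_le] at hsq
  rw [← hy3] at hKcube hcube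
  exact {
    w_pos := hC.w_pos n
    one_le_y := hy1
    C_pos := hC.Cconst_pos
    η_pos := hη
    η_le := hη_le
    δ_pos := hδ
    δ_le := hδη
    sum_w := hy3.symm
    sum_sq_le := by linarith [hsq.2]
    le_sum_sq := by linarith [hsq.1]
    sum_cube_le := hcube
    le_sum_cube := hKcube
    w_le := fun i => (le_ciSup (Set.finite_range (w n)).bddAbove i).trans hmax
    one_le_f := hf1
    f_le := hfy
    le_ηf := hfη
    le_ηy := (div_le_iff₀' hη).1 hyη
    C_le_ηy := (div_le_iff₀' hη).1 hyC
    δ_mul_le := hδC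
    δ_mul_K_le := hKδ
    δ_mul_C_le := hCδ }

lemma exists_isErrorLevel {C η : ℝ} (hC : 0 < C) (hη : 0 < η) (hη_le : η ≤ 1 / 4) :
    ∃ θ > 0, ∀ f g, 1 ≤ g → g ≤ f → IsErrorLevel f C η g (θ * g) := by
  refine ⟨min η (η / C), by positivity, fun f g hg hgf => ?_⟩
  have hg_pos : 0 < g := zero_lt_one.trans_le hg
  have hθη : min η (η / C) ≤ η := min_le_left _ _
  have hθC : min η (η / C) * C ≤ η := (le_div_iff₀ hC).1 (min_le_right _ _)
  set θ := min η (η / C)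
  exact {
    pos := by positivity
    one_le_g := hg
    g_le := hgf
    mul_four_le := by nlinarith
    mul_C_le := by nlinarith
    le_ηf := mul_le_mul hθη hgf hg_pos.le hη.le }

lemma exists_mul_exp_le {θ : ℝ} (a : ℝ) (hθ : 0 < θ) : ∃ A > 0, ∀ g ≥ 0,
    a * Real.exp (-(θ * g)) ≤ A * Real.exp (-g / A) := by
  have hA : 0 < max a θ⁻¹ := lt_max_of_lt_right (inv_pos.2 hθ)
  refine ⟨max a θ⁻¹, hA, fun g hg => mul_le_mul (le_max_left _ _) (Real.exp_le_exp.2 ?_)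
    (Real.exp_pos _).le hA.le⟩
  rw [neg_div, neg_le_neg_iff, div_le_iff₀ hA]
  have hone : 1 ≤ θ * max a θ⁻¹ := by
    rw [← inv_le_iff_one_le_mul₀' hθ]
    exact le_max_right _ _
  nlinarith

theorem CondC.measure_not_exploredBetween_le {w : ∀ n : ℕ, Fin n → ℝ} {μ : Measure ℝ}
    (hC : CondC w μ) {f : ℕ → ℝ} {n : ℕ} {η K δ ε ε' x : ℝ} (hη : 100 * η ≤ ε')
    (H : NearCritical (w n) (ell w n ^ ((1 : ℝ) / 3)) (f n) (Cconst μ) η K δ)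
    (L : IsErrorLevel (f n) (Cconst μ) η (f n ^ ε) x) :
    expMeasure' n (w n) (pf w f n) {ω | ¬ ExploredBetween (graphOf ω.1) ω.2
        (f n * ell w n ^ ((2 : ℝ) / 3) / Cconst μ)
        (ell w n ^ ((2 : ℝ) / 3) / (f n ^ (1 - ε) * Cconst μ))
        (2 * (1 - ε') * f n * ell w n ^ ((2 : ℝ) / 3) / Cconst μ)
        (2 * (1 + ε') * f n * ell w n ^ ((2 : ℝ) / 3) / Cconst μ)}
      ≤ ENNReal.ofReal (6 * Real.exp (-x)) := by
  have hf := H.f_pos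
  have hC_pos := H.C_pos
  have hT : 0 ≤ f n * ell w n ^ ((2 : ℝ) / 3) :=
    mul_nonneg hf.le (Real.rpow_nonneg (hC.ell_nonneg n) _)
  have hmeasure := H.measure_not_exploredBetween_le L
  rw [hC.ell_rpow_third_sq] at hmeasure
  rw [hC.pf_eq_criticalProb]
  refine le_trans
    (measure_mono fun ω hω h => hω (ExploredBetween.mono h (le_of_eq ?_) ?_ ?_)) hmeasure
  · rw [Real.rpow_sub hf, Real.rpow_one]
    have : f n ^ ε ≠ 0 := (Real.rpow_pos_of_pos hf ε).ne'
    field_simp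
  · rw [mul_assoc (2 * (1 - ε'))]
    exact div_le_div_of_nonneg_right (mul_le_mul_of_nonneg_right (by linarith) hT) hC_pos.le
  · rw [mul_assoc (2 * (1 + ε'))]
    exact div_le_div_of_nonneg_right (mul_le_mul_of_nonneg_right (by linarith) hT) hC_pos.le

/-- Theorem of the paper: the component `H*_f` being explored at time
`⌊f ℓ_n^{2/3}/C⌋` starts its exploration before time `ℓ_n^{2/3}/(f^{1−ε} C)` and ends it
between times `2(1−ε') f ℓ_n^{2/3}/C` and `2(1+ε') f ℓ_n^{2/3}/C`. -/
theorem exploration_times_of_giant_component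
    (w : ∀ n : ℕ, Fin n → ℝ) (μ : Measure ℝ) (hC : CondC w μ)
    (ε' : ℝ) (hε0 : 0 < ε') (hε1 : ε' < 1)
    (f : ℕ → ℝ) (hf : f =o[atTop] fun n : ℕ => (n : ℝ) ^ ((1 : ℝ) / 3)) :
    ∃ A > (0 : ℝ), ∃ F : ℝ, ∀ ε : ℝ, 0 < ε → ε ≤ 1 →
      ∀ᶠ n : ℕ in atTop, F ≤ f n →
        expMeasure' n (w n) (pf w f n)
          {ω : (Fin n → Fin n → Bool) × (Fin n → Fin n) |
            ¬ ∀ c : (graphOf ω.1).ConnectedComponent,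
              (startT (graphOf ω.1) ω.2 c
                  < Nat.floor (f n * ell w n ^ ((2 : ℝ) / 3) / Cconst μ) ∧
                Nat.floor (f n * ell w n ^ ((2 : ℝ) / 3) / Cconst μ)
                  ≤ startT (graphOf ω.1) ω.2 c + csize (graphOf ω.1) c) →
              ((startT (graphOf ω.1) ω.2 c : ℝ) + 1
                  ≤ ell w n ^ ((2 : ℝ) / 3) / (f n ^ (1 - ε) * Cconst μ) ∧
                2 * (1 - ε') * f n * ell w n ^ ((2 : ℝ) / 3) / Cconst μ
                  ≤ ((startT (graphOf ω.1) ω.2 c + csize (graphOf ω.1) c : ℕ) : ℝ) ∧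
                ((startT (graphOf ω.1) ω.2 c + csize (graphOf ω.1) c : ℕ) : ℝ)
                  ≤ 2 * (1 + ε') * f n * ell w n ^ ((2 : ℝ) / 3) / Cconst μ)}
        ≤ ENNReal.ofReal (A * Real.exp (-(f n ^ ε) / A)) := by
  set η := min (ε' / 100) (1 / 200)
  have hη : 0 < η := by positivity
  have hη_le : η ≤ 1 / 200 := min_le_right _ _
  have hηε : 100 * η ≤ ε' := (le_div_iff₀' (by norm_num)).1 (min_le_left _ _)
  obtain ⟨K, δ, hnear⟩ := hC.eventually_nearCritical hf hη hη_le
  obtain ⟨θ, hθ, hlevel⟩ := exists_isErrorLevel hC.Cconst_pos hη (by linarith)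
  obtain ⟨A, hA, hexp⟩ := exists_mul_exp_le 6 hθ
  refine ⟨A, hA, max 1 ((η + 2 * Cconst μ) / η), fun ε hε hε_le => ?_⟩
  filter_upwards [hnear] with n hn hF
  have hf1 : 1 ≤ f n := (le_max_left _ _).trans hF
  have hg1 : 1 ≤ f n ^ ε := Real.one_le_rpow hf1 hε.le
  have hgf : f n ^ ε ≤ f n := Real.rpow_le_self_of_one_le hf1 hε_le
  have H := hn hf1 ((div_le_iff₀' hη).1 ((le_max_right _ _).trans hF))
  exact (hC.measure_not_exploredBetween_le hηε H (hlevel _ _ hg1 hgf)).trans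
    (ENNReal.ofReal_le_ofReal (hexp _ (zero_le_one.trans hg1)))
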